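/- arXiv:1803.08368 — 6 statements merged into one kernel-verified Lean document; each statement's English description precedes it below -/
import Mathlib

section
/- Let f₁(z) = e^{-z+γ} + c with γ, c ∈ ℂ, Re(γ) < 0, Re(c) ≥ 1, and let f₂(z) = e^{z+μ} + d with μ, d ∈ ℂ, Re(μ) < 0, Re(d) ≤ −1. Then the transcendental semigroup S generated by f₁ and f₂ (i.e., the set of all finite compositions of f₁ and f₂) has empty escaping set: I(S) = ∅. -/
/-!
The map `z ↦ exp (-z + γ) + c` sends the closed right half-plane into the closed unit disc around
`c`, which lies in the closed right half-plane again because `Re c ≥ 1`. So a point with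
`Re z ≥ 0` has a bounded orbit under the first generator. Symmetrically, a point with `Re z ≤ 0`
has a bounded orbit under the second generator. Every point is in one of the two half-planes, so
no point escapes under both generators.
-/

open Filter Topology Set

noncomputable section

/-- A sequence of maps converges locally uniformly on `U` to some limit function. -/
def ConvLocUnifOn (F : ℕ → ℂ → ℂ) (U : Set ℂ) : Prop :=
  ∃ g : ℂ → ℂ, TendstoLocallyUniformlyOn F g Filter.atTop U

/-- A sequence of maps diverges to `∞` locally uniformly on `U`. -/
def DivLocUnifOn (F : ℕ → ℂ → ℂ) (U : Set ℂ) : Prop :=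
  ∀ K, K ⊆ U → IsCompact K → ∀ M : ℝ, ∀ᶠ k in Filter.atTop, ∀ z ∈ K, M ≤ ‖F k z‖

/-- A family `S` of maps of `ℂ` is normal at the point `z`: on some neighborhood of `z`,
every sequence from `S` has a subsequence that converges locally uniformly or diverges
locally uniformly to `∞`. -/
def NormalAt (S : Set (ℂ → ℂ)) (z : ℂ) : Prop :=
  ∃ U ∈ 𝓝 z, ∀ F : ℕ → ℂ → ℂ, (∀ k, F k ∈ S) →
    ∃ φ : ℕ → ℕ, StrictMono φ ∧ (ConvLocUnifOn (F ∘ φ) U ∨ DivLocUnifOn (F ∘ φ) U)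

/-- The Fatou set of a family `S`: the set of points where `S` is normal. -/
def FatouSet (S : Set (ℂ → ℂ)) : Set ℂ := {z | NormalAt S z}

/-- The Julia set of a family `S`: the complement of the Fatou set. -/
def JuliaSet (S : Set (ℂ → ℂ)) : Set ℂ := (FatouSet S)ᶜ

/-- The cyclic semigroup generated by a single map: all iterates `f^[n]`, `n ≥ 1`. -/
def cyclic (f : ℂ → ℂ) : Set (ℂ → ℂ) := {g | ∃ n : ℕ, 0 < n ∧ g = f^[n]}

/-- `z` escapes under `f`: the iterates of `f` at `z` tend to `∞`. -/
def Escapes (f : ℂ → ℂ) (z : ℂ) : Prop :=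
  Filter.Tendsto (fun n => ‖f^[n] z‖) Filter.atTop Filter.atTop

/-- The escaping set of a semigroup `S`. -/
def escSet (S : Set (ℂ → ℂ)) : Set ℂ := {z | ∀ f ∈ S, Escapes f z}

/-- The escaping set of a single map `f`. -/
def escSetOf (f : ℂ → ℂ) : Set ℂ := {z | Escapes f z}

/-- `f` is a transcendental entire function: entire and not a polynomial. -/
def IsTransEntire (f : ℂ → ℂ) : Prop :=
  Differentiable ℂ f ∧ ¬ ∃ p : Polynomial ℂ, ∀ z, f z = p.eval z

/-- `S` is a transcendental semigroup: a nonempty set of transcendental entire functions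
closed under composition. -/
def IsTransSemigroup (S : Set (ℂ → ℂ)) : Prop :=
  S.Nonempty ∧ (∀ f ∈ S, IsTransEntire f) ∧ ∀ f ∈ S, ∀ g ∈ S, f ∘ g ∈ S

/-- `S` is a holomorphic semigroup: a nonempty set of entire functions closed under
composition. -/
def IsHoloSemigroup (S : Set (ℂ → ℂ)) : Prop :=
  S.Nonempty ∧ (∀ f ∈ S, Differentiable ℂ f) ∧ ∀ f ∈ S, ∀ g ∈ S, f ∘ g ∈ S

/-- Membership in the semigroup generated by a set `A` of maps: all finite compositions
of members of `A`. -/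
inductive InGenSemigroup (A : Set (ℂ → ℂ)) : (ℂ → ℂ) → Prop
  | base {f : ℂ → ℂ} : f ∈ A → InGenSemigroup A f
  | comp {f g : ℂ → ℂ} : InGenSemigroup A f → InGenSemigroup A g → InGenSemigroup A (f ∘ g)

/-- The semigroup generated by a set `A` of maps. -/
def genSemigroup (A : Set (ℂ → ℂ)) : Set (ℂ → ℂ) := {f | InGenSemigroup A f}

/-- The backward orbit of a point `z` under a semigroup `S`. -/
def backwardOrbit (S : Set (ℂ → ℂ)) (z : ℂ) : Set ℂ := {w | ∃ f ∈ S, f w = z}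

/-- The exceptional set of a semigroup `S`: points with finite backward orbit. -/
def excSet (S : Set (ℂ → ℂ)) : Set ℂ := {z | (backwardOrbit S z).Finite}

/-- `U` is a Fatou component of the family `S`: a connected component of the Fatou set. -/
def IsFatouComponent (S : Set (ℂ → ℂ)) (U : Set ℂ) : Prop :=
  ∃ z ∈ FatouSet S, U = connectedComponentIn (FatouSet S) z

/-- `w` is an asymptotic value of `f`: `f(γ(t)) → w` along some curve `γ(t) → ∞`. -/
def IsAsymptoticValue (f : ℂ → ℂ) (w : ℂ) : Prop :=
  ∃ γ : ℝ → ℂ, ContinuousOn γ (Set.Ici (0 : ℝ)) ∧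
    Filter.Tendsto (fun t => ‖γ t‖) Filter.atTop Filter.atTop ∧
    Filter.Tendsto (fun t => f (γ t)) Filter.atTop (𝓝 w)

/-- A point of a set that `f` maps into itself with bounded image does not escape under `f`. -/
lemma not_escapes_of_bounded {f : ℂ → ℂ} {P : Set ℂ} {R : ℝ}
    (hP : ∀ z ∈ P, f z ∈ P ∧ ‖f z‖ ≤ R) {z : ℂ} (hz : z ∈ P) : ¬ Escapes f z := by
  intro h
  have hmem : ∀ n, f^[n] z ∈ P := by
    intro n
    induction n with
    | zero => exact hz
    | succ k ih =>
      rw [Function.iterate_succ_apply']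
      exact (hP _ ih).1
  obtain ⟨n, hn⟩ := ((tendsto_add_atTop_iff_nat 1).2 h |>.eventually_gt_atTop R).exists
  rw [Function.iterate_succ_apply'] at hn
  exact absurd (hP _ (hmem n)).2 (not_le.2 hn)

lemma norm_exp_le_one {w : ℂ} (hw : w.re ≤ 0) : ‖Complex.exp w‖ ≤ 1 := by
  rw [Complex.norm_exp]
  exact Real.exp_le_one_iff.2 hw

theorem escaping_set_empty_of_two_param_families
    (γ c μ d : ℂ) (hγ : γ.re < 0) (hc : 1 ≤ c.re) (hμ : μ.re < 0) (hd : d.re ≤ -1) :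
    escSet (genSemigroup
      {fun z => Complex.exp (-z + γ) + c, fun z => Complex.exp (z + μ) + d}) = ∅ := by
  refine eq_empty_iff_forall_notMem.2 fun z hz => ?_
  rcases le_total 0 z.re with h | h
  · refine not_escapes_of_bounded (P := {z | 0 ≤ z.re}) (R := 1 + ‖c‖) (fun w hw => ?_) h
      (hz _ (.base (Or.inl rfl)))
    have hle : ‖Complex.exp (-w + γ)‖ ≤ 1 := norm_exp_le_one (by
      simp only [mem_ofPred_eq] at hw
      simp only [Complex.add_re, Complex.neg_re]
      linarith)
    refine ⟨?_, (norm_add_le _ _).trans (by gcongr)⟩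
    have := (abs_le.1 ((Complex.abs_re_le_norm _).trans hle)).1
    simp only [mem_ofPred_eq, Complex.add_re (Complex.exp _)]
    linarith
  · refine not_escapes_of_bounded (P := {z | z.re ≤ 0}) (R := 1 + ‖d‖) (fun w hw => ?_) h
      (hz _ (.base (Or.inr rfl)))
    have hle : ‖Complex.exp (w + μ)‖ ≤ 1 := norm_exp_le_one (by
      simp only [mem_ofPred_eq] at hw
      simp only [Complex.add_re]
      linarith)
    refine ⟨?_, (norm_add_le _ _).trans (by gcongr)⟩
    have := (abs_le.1 ((Complex.abs_re_le_norm _).trans hle)).2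
    simp only [mem_ofPred_eq, Complex.add_re (Complex.exp _)]
    linarith
end
end

section
/- Let S be the transcendental semigroup generated by f(z) = e^{z} and g(z) = e^{-z} (i.e., the set of all finite compositions of f and g). Then the escaping set of S is empty: I(S) = ∅. -/
/-!
Write `f z = exp z` and `g z = exp (-z)`. The idea is to exhibit, for each `z` that escapes
under `f`, an element of the semigroup under which the orbit of `z` is bounded.

The map `g` has a real attracting fixed point `p`, and it contracts a convex box around `p` towards
`p` (`gmap_mapsTo`, `gmap_iter_contract`). Moreover `g ∘ g` sends the half-plane `2 ≤ Re w` into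
that box, because `g` sends it close to `0`, and `g 0 = 1` (`gmap_gmap_mem`).

If `z` escapes under `f`, then `Re (f^[n] z) → ∞`, since `‖exp w‖ = exp (Re w)`; the real orbit
satisfies `f^[n] p > n`, as `x + 1 ≤ exp x`. Fix `N ≥ 2` with both `Re (f^[N] z)` and `Re (f^[N] p)` larger
than `2`. By continuity `Re (f^[N] w) > 2` on a ball `B` around `p`, so for `m` large the map
`h = g^[m + 2] ∘ f^[N]` sends both `z` and `B` into `B`. The `h`-orbit of `z` is thus bounded.
-/

open Filter Topology Set

noncomputable section

/-- The generator `z ↦ exp z`. -/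
def fmap : ℂ → ℂ := fun z => Complex.exp z

/-- The generator `z ↦ exp (-z)`. -/
def gmap : ℂ → ℂ := fun z => Complex.exp (-z)

/-- The least real part in `box`: a lower bound for `Re (exp (-w)) = exp (-Re w) * cos (Im w)` when
`Re w ≤ 2` and `|Im w| ≤ 1`. -/
def boxLeft : ℝ := Real.exp (-2) * Real.cos 1

/-- A rectangle in the right half-plane which `gmap` maps into itself. -/
def box : Set ℂ := (Icc boxLeft 2) ×ℂ (Icc (-1) 1)

lemma mem_box {w : ℂ} :
    w ∈ box ↔ (boxLeft ≤ w.re ∧ w.re ≤ 2) ∧ (-1 ≤ w.im ∧ w.im ≤ 1) := by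
  simp [box, Complex.mem_reProdIm]

lemma boxLeft_pos : 0 < boxLeft := mul_pos (Real.exp_pos _) Real.cos_one_pos

lemma boxLeft_le : boxLeft ≤ Real.exp (-2) :=
  mul_le_of_le_one_right (Real.exp_pos _).le (Real.cos_le_one 1)

lemma exp_neg_two_le : Real.exp (-2) ≤ 1 / 4 := by
  have h1 : Real.exp (-1) ≤ 1 / 2 := by
    rw [Real.exp_neg, one_div]
    exact inv_anti₀ (by norm_num) (by linarith [Real.add_one_le_exp 1])
  have h2 : Real.exp (-2) = Real.exp (-1) * Real.exp (-1) := by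
    rw [← Real.exp_add]; norm_num
  rw [h2]
  nlinarith [Real.exp_pos (-1)]

lemma convex_box : Convex ℝ box := 
  ((convex_Icc _ _).linear_preimage Complex.reLm).inter
    ((convex_Icc _ _).linear_preimage Complex.imLm)

lemma norm_gmap (w : ℂ) : ‖gmap w‖ = Real.exp (-w.re) := by
  simp [gmap, Complex.norm_exp]

lemma gmap_mapsTo : MapsTo gmap box box := by
  intro w hw
  obtain ⟨⟨h1, h2⟩, h3, h4⟩ := mem_box.1 hw
  have hn : ‖gmap w‖ ≤ 1 := by
    rw [norm_gmap]
    exact Real.exp_le_one_iff.2 (by linarith [boxLeft_pos])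
  have him := abs_le.1 ((Complex.abs_im_le_norm (gmap w)).trans hn)
  have hre := abs_le.1 ((Complex.abs_re_le_norm (gmap w)).trans hn)
  have hcos : Real.cos 1 ≤ Real.cos w.im := by
    rw [← Real.cos_abs w.im]
    exact Real.cos_le_cos_of_nonneg_of_le_pi (abs_nonneg _) (by linarith [Real.pi_gt_three])
      (abs_le.2 ⟨h3, h4⟩)
  have hlow : boxLeft ≤ (gmap w).re := by
    have : (gmap w).re = Real.exp (-w.re) * Real.cos w.im := by
      simp [gmap, Complex.exp_re]
    rw [this]
    exact mul_le_mul (Real.exp_le_exp.2 (by linarith)) hcos Real.cos_one_pos.le (Real.exp_pos _).le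
  exact mem_box.2 ⟨⟨hlow, by linarith⟩, him⟩

lemma gmap_contract {u v : ℂ} (hu : u ∈ box) (hv : v ∈ box) :
    ‖gmap u - gmap v‖ ≤ Real.exp (-boxLeft) * ‖u - v‖ := by
  refine convex_box.norm_image_sub_le_of_norm_hasDerivWithin_le (f := gmap)
    (f' := fun x => -gmap x) (fun x _ => ?_) (fun x hx => ?_) hv hu
  · have := ((hasDerivAt_neg x).cexp).hasDerivWithinAt (s := box)
    simpa [show gmap = fun z => Complex.exp (-z) from rfl] using this
  · rw [norm_neg, norm_gmap]
    exact Real.exp_le_exp.2 (neg_le_neg (mem_box.1 hx).1.1)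

lemma gmap_iter_contract {p w : ℂ} (hp : p ∈ box) (hfix : gmap p = p) (hw : w ∈ box) (m : ℕ) :
    ‖gmap^[m] w - p‖ ≤ Real.exp (-boxLeft) ^ m * ‖w - p‖ := by
  induction m with
  | zero => simp
  | succ k ih =>
    rw [Function.iterate_succ_apply', pow_succ', mul_assoc]
    calc ‖gmap (gmap^[k] w) - p‖ = ‖gmap (gmap^[k] w) - gmap p‖ := by rw [hfix]
      _ ≤ Real.exp (-boxLeft) * ‖gmap^[k] w - p‖ :=
        gmap_contract (gmap_mapsTo.iterate k hw) hp
      _ ≤ _ := by gcongr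

/-- After one step `‖gmap w‖ ≤ exp (-2) ≤ 1 / 4`, so after two steps the point is within `1 / 2` of
`exp 0 = 1`, hence in `box`. -/
lemma gmap_gmap_mem {w : ℂ} (hw : 2 ≤ w.re) : gmap (gmap w) ∈ box := by
  have h1 : ‖gmap w‖ ≤ 1 / 4 := by
    rw [norm_gmap]
    exact (Real.exp_le_exp.2 (by linarith)).trans exp_neg_two_le
  have h2 : ‖gmap (gmap w) - 1‖ ≤ 2 * ‖-gmap w‖ :=
    Complex.norm_exp_sub_one_le (by rw [norm_neg]; linarith)
  rw [norm_neg] at h2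
  have hre := abs_le.1 ((Complex.abs_re_le_norm _).trans h2)
  have him := abs_le.1 ((Complex.abs_im_le_norm _).trans h2)
  simp only [Complex.sub_re, Complex.one_re, Complex.sub_im, Complex.one_im] at hre him
  have := boxLeft_le.trans exp_neg_two_le
  exact mem_box.2 ⟨⟨by linarith, by linarith⟩, by linarith, by linarith⟩

lemma exists_fixed : ∃ p : ℝ, 0 < p ∧ (p : ℂ) ∈ box ∧ gmap p = p := by
  have hc : ContinuousOn (fun x : ℝ => x - Real.exp (-x)) (Icc 0 1) := by fun_prop
  have h0 : (0 : ℝ) ∈ Icc ((0 : ℝ) - Real.exp (-0)) (1 - Real.exp (-1)) := by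
    simp
  obtain ⟨p, ⟨_, hp1⟩, hp⟩ := intermediate_value_Icc (zero_le_one (α := ℝ)) hc h0
  have hp : Real.exp (-p) = p := (sub_eq_zero.1 hp).symm
  have hp2 : Real.exp (-2) ≤ p := hp ▸ Real.exp_le_exp.2 (by linarith)
  refine ⟨p, hp ▸ Real.exp_pos _, mem_box.2 ?_, ?_⟩
  · simp only [Complex.ofReal_re, Complex.ofReal_im]
    exact ⟨⟨boxLeft_le.trans hp2, by linarith⟩, by norm_num, by norm_num⟩
  · change Complex.exp (-(p : ℂ)) = p
    rw [← Complex.ofReal_neg, ← Complex.ofReal_exp, hp]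

lemma fmap_iter_ofReal {p : ℝ} (hp : 0 < p) (n : ℕ) : (n : ℝ) < (fmap^[n] p).re := by
  have key : fmap^[n] p = ((Real.exp^[n] p : ℝ) : ℂ) ∧ (n : ℝ) < Real.exp^[n] p := by
    induction n with
    | zero => simpa using hp
    | succ k ih =>
      rw [Function.iterate_succ_apply', Function.iterate_succ_apply', ih.1]
      refine ⟨(Complex.ofReal_exp _).symm, ?_⟩
      push_cast
      linarith [Real.add_one_le_exp (Real.exp^[k] p)]
  rw [key.1]
  exact key.2

/-- Escape under `exp` forces large real parts, because `‖exp w‖ = exp (Re w)`. -/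
lemma exists_re_gt_of_escapes {z : ℂ} (hz : Escapes fmap z) :
    ∃ N : ℕ, 2 ≤ N ∧ 2 < (fmap^[N] z).re := by
  have h := (hz.comp (tendsto_add_atTop_nat 1)).eventually_gt_atTop (Real.exp 2)
  obtain ⟨N, hN, h2⟩ := (h.and (eventually_ge_atTop 2)).exists
  refine ⟨N, h2, ?_⟩
  rw [Function.comp_apply, Function.iterate_succ_apply'] at hN
  simpa [fmap, Complex.norm_exp] using hN

lemma iterate_mem_genSemigroup {A : Set (ℂ → ℂ)} {k : ℂ → ℂ} (hk : k ∈ A) (n : ℕ) :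
    k^[n + 1] ∈ genSemigroup A := by
  induction n with
  | zero => exact InGenSemigroup.base hk
  | succ n ih =>
    rw [Function.iterate_succ]
    exact InGenSemigroup.comp ih (InGenSemigroup.base hk)

theorem escaping_set_empty_exp_exp_neg :
    escSet (genSemigroup
      {fun z => Complex.exp z, fun z => Complex.exp (-z)}) = ∅ := by
  change escSet (genSemigroup {fmap, gmap}) = ∅
  refine eq_empty_iff_forall_notMem.2 fun z hz => ?_
  have hf : fmap ∈ ({fmap, gmap} : Set (ℂ → ℂ)) := by simp
  have hg : gmap ∈ ({fmap, gmap} : Set (ℂ → ℂ)) := by simp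
  obtain ⟨N, hN2, hN⟩ := exists_re_gt_of_escapes (hz fmap (InGenSemigroup.base hf))
  obtain ⟨p, hp0, hpbox, hpfix⟩ := exists_fixed
  have hpN : 2 < (fmap^[N] p).re :=
    lt_of_le_of_lt (by exact_mod_cast hN2) (fmap_iter_ofReal hp0 N)
  have hcf : Continuous fmap := Complex.continuous_exp
  have hopen : IsOpen {w : ℂ | 2 < (fmap^[N] w).re} :=
    isOpen_lt continuous_const (Complex.continuous_re.comp (hcf.iterate N))
  obtain ⟨δ, hδ, hball⟩ := Metric.isOpen_iff.1 hopen p hpN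
  -- The box has diameter less than `4`, so this `m` makes `gmap^[m]` send it into the `δ`-ball.
  obtain ⟨m, hm⟩ : ∃ m : ℕ, Real.exp (-boxLeft) ^ m < δ / 4 :=
    exists_pow_lt_of_lt_one (by positivity) (Real.exp_lt_one_iff.2 (by linarith [boxLeft_pos]))
  have hdist : ∀ w ∈ box, ‖w - p‖ ≤ 4 := by
    intro w hw
    obtain ⟨⟨h1, h2⟩, h3, h4⟩ := mem_box.1 hw
    obtain ⟨⟨k1, k2⟩, k3, k4⟩ := mem_box.1 hpbox
    have := boxLeft_pos
    refine (Complex.norm_le_abs_re_add_abs_im _).trans ?_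
    have hre : |(w - p).re| ≤ 2 := by
      rw [Complex.sub_re]; exact abs_le.2 ⟨by linarith, by linarith⟩
    have him : |(w - p).im| ≤ 2 := by
      rw [Complex.sub_im]; exact abs_le.2 ⟨by linarith, by linarith⟩
    linarith
  have hstep : ∀ w : ℂ, 2 < (fmap^[N] w).re →
      (gmap^[m + 1 + 1] ∘ fmap^[N]) w ∈ Metric.ball (p : ℂ) δ := by
    intro w hw
    have hb := gmap_gmap_mem hw.le
    rw [Function.comp_apply, Function.iterate_succ_apply, Function.iterate_succ_apply,
      Metric.mem_ball, dist_eq_norm]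
    calc _ ≤ Real.exp (-boxLeft) ^ m * _ := gmap_iter_contract hpbox hpfix hb m
      _ ≤ Real.exp (-boxLeft) ^ m * 4 := by gcongr; exact hdist _ hb
      _ < δ := by linarith
  have hmem : gmap^[m + 1 + 1] ∘ fmap^[N] ∈ genSemigroup {fmap, gmap} := by
    obtain ⟨N', rfl⟩ : ∃ N', N = N' + 1 := ⟨N - 1, by omega⟩
    exact InGenSemigroup.comp (iterate_mem_genSemigroup hg _) (iterate_mem_genSemigroup hf _)
  have hbdd : ∀ n : ℕ,
      (gmap^[m + 1 + 1] ∘ fmap^[N])^[n + 1] z ∈ Metric.ball (p : ℂ) δ := by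
    intro n
    induction n with
    | zero => exact hstep z hN
    | succ n ih =>
      rw [Function.iterate_succ_apply']
      exact hstep _ (hball ih)
  have hesc := (hz _ hmem).comp (tendsto_add_atTop_nat 1)
  obtain ⟨n, hn⟩ := (hesc.eventually_gt_atTop (‖(p : ℂ)‖ + δ)).exists
  have h1 := hbdd n
  rw [Metric.mem_ball, dist_eq_norm] at h1
  have h2 := norm_le_norm_add_norm_sub' ((gmap^[m + 1 + 1] ∘ fmap^[N])^[n + 1] z) (p : ℂ)
  simp only [Function.comp_apply] at hn
  exact absurd (lt_of_lt_of_le hn h2) (by linarith)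
end
end

section
/- Let f be a transcendental entire function such that the Fatou set F(f) has no unbounded component (every connected component of F(f) is a bounded set). Then every Fatou exceptional value of f belongs to the Julia set J(f); that is, if a ∈ ℂ has finite backward orbit ⋃_{n ≥ 1} (f^n)^{-1}({a}), then a ∈ J(f). -/
/-!
Suppose that `f⁻¹{a}` is finite (which is all that is needed of a finite backward orbit) and that
`a` lies in the Fatou set `F`. Choose `r > 0` with `ball a r ⊆ F`. As `F` is backward invariant
(`mem_fatouSet_of_map_mem`), `f⁻¹(ball a r) ⊆ F`, so `r ≤ ‖f - a‖` on the boundary of every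
component `V` of `F`. All components being bounded, the maximum principle for `1 / (f - a)` shows
that a component meeting `f⁻¹(ball a r)` contains a zero of `f - a`
(`exists_zero_of_le_on_frontier`). There are finitely many zeros, so `f⁻¹(ball a r)` is covered by
finitely many bounded components and is bounded (`isBounded_preimage_ball`). Hence `f` stays at
distance at least `r` from `a` near `∞`, so it has no essential singularity there
(`exists_growth_of_bounded_below`), has polynomial growth, and is a polynomial by Cauchy's
estimates (`exists_polynomial_of_growth`), a contradiction.
-/


open Filter Topology Set

noncomputable section

/-! ### Entire functions without an essential singularity at infinity -/

lemma exists_polynomial_of_growth {f : ℂ → ℂ} (hf : Differentiable ℂ f) {C : ℝ} {k : ℕ}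
    (h : ∀ᶠ z in Bornology.cobounded ℂ, ‖f z‖ ≤ C * ‖z‖ ^ k) :
    ∃ p : Polynomial ℂ, ∀ z, f z = p.eval z := by
  have hd : ∀ n, k < n → iteratedDeriv n f 0 = 0 := by
    intro n hn
    rw [← norm_eq_zero]
    refine le_antisymm ?_ (norm_nonneg _)
    obtain ⟨R₀, -, hR₀⟩ := (Filter.hasBasis_cobounded_norm (E := ℂ)).eventually_iff.1 h
    have hbound : ∀ R : ℝ, max R₀ 1 ≤ R → ‖iteratedDeriv n f 0‖ ≤ n.factorial * |C| / R := by
      intro R hR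
      have hR1 : 1 ≤ R := (le_max_right _ _).trans hR
      have hR0 : 0 < R := by linarith
      have h1 := Complex.norm_iteratedDeriv_le_of_forall_mem_sphere_norm_le (c := 0) (R := R)
        (C := |C| * R ^ k) n hR0 hf.diffContOnCl (fun z hz => by
          have hz' : ‖z‖ = R := by simpa using hz
          have := hR₀ (x := z) (by
            simpa [hz'] using (le_max_left _ _).trans hR)
          rw [hz'] at this
          exact this.trans (by gcongr; exact le_abs_self C))
      refine h1.trans ?_
      rw [div_le_div_iff₀ (by positivity) hR0]
      have : R ^ k * R ≤ R ^ n := by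
        rw [← pow_succ]
        exact pow_le_pow_right₀ hR1 hn
      calc (n.factorial : ℝ) * (|C| * R ^ k) * R = n.factorial * |C| * (R ^ k * R) := by ring
        _ ≤ n.factorial * |C| * R ^ n := by gcongr
    have hlim : Tendsto (fun R : ℝ => n.factorial * |C| / R) atTop (𝓝 0) :=
      tendsto_const_nhds.div_atTop tendsto_id
    exact ge_of_tendsto hlim ((eventually_ge_atTop (max R₀ 1)).mono hbound)
  refine ⟨∑ n ∈ Finset.range (k + 1),
    Polynomial.C ((n.factorial : ℂ)⁻¹ * iteratedDeriv n f 0) * Polynomial.X ^ n, fun z => ?_⟩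
  rw [← Complex.taylorSeries_eq_of_entire' 0 z hf, tsum_eq_sum (s := Finset.range (k + 1))]
  · simp [Polynomial.eval_finsetSum]
  · intro n hn
    rw [hd n (by simpa [Nat.lt_succ_iff] using hn)]
    simp

/-- The function `w ↦ 1 / (f (1 / w) - a)` has a removable singularity at `0` and vanishes there
to a finite order. -/
lemma exists_growth_of_bounded_below {f : ℂ → ℂ} (hf : Differentiable ℂ f) {a : ℂ} {r : ℝ}
    (hr : 0 < r) (h : ∀ᶠ z in Bornology.cobounded ℂ, r ≤ ‖f z - a‖) :
    ∃ C : ℝ, ∃ k : ℕ, ∀ᶠ z in Bornology.cobounded ℂ, ‖f z‖ ≤ C * ‖z‖ ^ k := by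
  set g : ℂ → ℂ := fun w => (f w⁻¹ - a)⁻¹ with hg
  have h' : ∀ᶠ w in 𝓝[≠] (0 : ℂ), r ≤ ‖f w⁻¹ - a‖ := tendsto_inv₀_nhdsNE_zero.eventually h
  have hne : ∀ᶠ w in 𝓝[≠] (0 : ℂ), f w⁻¹ - a ≠ 0 :=
    h'.mono fun w hw => norm_pos_iff.1 (hr.trans_le hw)
  have hw0 : ∀ᶠ w in 𝓝[≠] (0 : ℂ), w ≠ 0 := eventually_mem_nhdsWithin
  have hgd : ∀ᶠ w in 𝓝[≠] (0 : ℂ), DifferentiableAt ℂ g w := by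
    filter_upwards [hne, hw0] with w h1 h2
    exact (((hf _).comp w (differentiableAt_inv h2)).sub_const a).inv h1
  have hgb : ∀ᶠ w in 𝓝[≠] (0 : ℂ), ‖g w - g 0‖ ≤ r⁻¹ + ‖g 0‖ := by
    filter_upwards [h'] with w h1
    refine (norm_sub_le _ _).trans (add_le_add ?_ le_rfl)
    rw [hg, norm_inv]
    exact inv_anti₀ hr h1
  have hlim := Complex.tendsto_limUnder_of_differentiable_on_punctured_nhds_of_bounded_under hgd
    ⟨_, eventually_map.2 hgb⟩
  set G := Function.update g 0 (limUnder (𝓝[≠] 0) g) with hG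
  have hGg : ∀ᶠ w in 𝓝[≠] (0 : ℂ), G w = g w := by
    filter_upwards [hw0] with w hw
    exact Function.update_of_ne hw _ _
  have hGan : AnalyticAt ℂ G 0 := by
    refine Complex.analyticAt_of_differentiable_on_punctured_nhds_of_continuousAt ?_
      (continuousAt_update_same.2 hlim)
    filter_upwards [hgd, hw0] with w h1 h2
    refine h1.congr_of_eventuallyEq ?_
    filter_upwards [isOpen_ne.mem_nhds h2] with x hx
    exact Function.update_of_ne hx _ _
  have hG0 : ¬ ∀ᶠ w in 𝓝 (0 : ℂ), G w = 0 := by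
    intro hz
    obtain ⟨w, h1, h2, h3⟩ := ((hz.filter_mono nhdsWithin_le_nhds).and (hGg.and hne)).exists
    rw [h2] at h1
    exact inv_ne_zero h3 h1
  obtain ⟨n, u, hu, hu0, hGu⟩ := hGan.exists_eventuallyEq_pow_smul_nonzero_iff.2 hG0
  have hub : ∀ᶠ w in 𝓝 (0 : ℂ), ‖u 0‖ / 2 < ‖u w‖ :=
    hu.continuousAt.norm.eventually_const_lt (half_lt_self (norm_pos_iff.2 hu0))
  have hfin : ∀ᶠ w in 𝓝[≠] (0 : ℂ), ‖f w⁻¹ - a‖ ≤ (‖u 0‖ / 2)⁻¹ * ‖w⁻¹‖ ^ n := by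
    filter_upwards [hGg, hGu.filter_mono nhdsWithin_le_nhds,
      hub.filter_mono nhdsWithin_le_nhds] with w h1 h2 h4
    have h5 : f w⁻¹ - a = (w ^ n * u w)⁻¹ := by
      have : g w = w ^ n * u w := by rw [← h1, h2]; simp
      rw [← this, hg, inv_inv]
    rw [h5, mul_inv, norm_mul, mul_comm, norm_inv, norm_inv, norm_pow, norm_inv, inv_pow]
    have := norm_pos_iff.2 hu0
    gcongr
  have hfin' : ∀ᶠ z in Bornology.cobounded ℂ, ‖f z - a‖ ≤ (‖u 0‖ / 2)⁻¹ * ‖z‖ ^ n := by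
    have := (tendsto_inv₀_cobounded' (α := ℂ)).eventually hfin
    simpa only [inv_inv] using this
  refine ⟨(‖u 0‖ / 2)⁻¹ + ‖a‖, n, ?_⟩
  have hlarge : ∀ᶠ z in Bornology.cobounded ℂ, 1 ≤ ‖z‖ :=
    tendsto_norm_cobounded_atTop.eventually_ge_atTop 1
  filter_upwards [hfin', hlarge] with z h1 h2
  have h3 : ‖f z‖ ≤ ‖f z - a‖ + ‖a‖ := by simpa using norm_add_le (f z - a) a
  have h4 : ‖a‖ ≤ ‖a‖ * ‖z‖ ^ n := le_mul_of_one_le_right (norm_nonneg _) (one_le_pow₀ h2)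
  linarith

/-! ### The Fatou set -/

lemma isOpen_fatouSet (S : Set (ℂ → ℂ)) : IsOpen (FatouSet S) := by
  rw [isOpen_iff_mem_nhds]
  rintro z ⟨U, hU, h⟩
  filter_upwards [eventually_mem_nhds_iff.2 hU] with w hw
  exact ⟨U, hw, h⟩

lemma mem_fatouSet_of_map_mem {f : ℂ → ℂ} (hf : Continuous f) {z : ℂ}
    (hz : f z ∈ FatouSet (cyclic f)) : z ∈ FatouSet (cyclic f) := by
  obtain ⟨U, hU, h⟩ := hz
  refine ⟨f ⁻¹' U, hf.continuousAt hU, fun F hF => ?_⟩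
  choose n hn hFn using hF
  by_cases h1 : ∃ᶠ k in atTop, n k = 1
  · obtain ⟨φ, hφ, hφ1⟩ := extraction_of_frequently_atTop h1
    have hconst : F ∘ φ = fun _ => f := by
      funext k
      simp [hFn, hφ1 k]
    refine ⟨φ, hφ, Or.inl ⟨f, ?_⟩⟩
    rw [hconst]
    intro u hu x _
    exact ⟨univ, univ_mem, Eventually.of_forall fun _ _ _ => refl_mem_uniformity hu⟩
  · -- Past finitely many terms, each iterate in the sequence is an iterate precomposed with `f`.
    obtain ⟨ψ, hψ, hψ1⟩ := extraction_of_eventually_atTop (not_frequently.1 h1)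
    have hFψ : ∀ k, F (ψ k) = f^[n (ψ k) - 1] ∘ f := by
      intro k
      rw [hFn, ← Function.iterate_succ, Nat.succ_eq_add_one, Nat.sub_add_cancel (hn _)]
    obtain ⟨φ, hφ, hlim⟩ := h (fun k => f^[n (ψ k) - 1]) (fun k => ⟨n (ψ k) - 1, by
      have := hn (ψ k)
      have := hψ1 k
      omega, rfl⟩)
    have hcomp : F ∘ (ψ ∘ φ) = fun k => ((fun k => f^[n (ψ k) - 1]) ∘ φ) k ∘ f := by
      funext k
      exact hFψ (φ k)
    refine ⟨ψ ∘ φ, hψ.comp hφ, ?_⟩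
    rw [hcomp]
    rcases hlim with ⟨g, hg⟩ | hdiv
    · exact Or.inl ⟨g ∘ f, hg.comp f (mapsTo_preimage f U) hf.continuousOn⟩
    · refine Or.inr fun K hK hKc M => ?_
      filter_upwards [hdiv (f '' K) (image_subset_iff.2 hK) (hKc.image hf) M] with k hk w hw
      exact hk (f w) (mem_image_of_mem f hw)

/-! ### Components of the Fatou set and preimages of a disc -/

/-- The minimum modulus principle on a bounded set. -/
lemma exists_zero_of_le_on_frontier {g : ℂ → ℂ} (hg : Differentiable ℂ g) {V : Set ℂ}
    (hV : Bornology.IsBounded V) {r : ℝ} (hr : 0 < r) (hfr : ∀ z ∈ frontier V, r ≤ ‖g z‖)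
    {z : ℂ} (hz : z ∈ V) (hzr : ‖g z‖ < r) : ∃ b ∈ V, g b = 0 := by
  by_contra! hne
  have hne' : ∀ w ∈ closure V, g w ≠ 0 := by
    intro w hw
    by_cases hwV : w ∈ V
    · exact hne w hwV
    · exact norm_pos_iff.1
        (hr.trans_le (hfr w ⟨hw, fun hwi => hwV (interior_subset hwi)⟩))
  have hle := Complex.norm_le_of_forall_mem_frontier_norm_le hV
    (hg.diffContOnCl.inv hne') (C := r⁻¹)
    (fun w hw => by
      rw [Pi.inv_apply, norm_inv]
      exact inv_anti₀ hr (hfr w hw)) (subset_closure hz)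
  rw [Pi.inv_apply, norm_inv,
    inv_le_inv₀ (norm_pos_iff.2 (hne z hz)) hr] at hle
  exact hzr.not_ge hle

lemma notMem_of_mem_frontier_connectedComponentIn {F : Set ℂ} (hF : IsOpen F) (z : ℂ) {w : ℂ}
    (hw : w ∈ frontier (connectedComponentIn F z)) : w ∉ F := by
  intro hwF
  obtain ⟨y, hyw, hyz⟩ := mem_closure_iff.1 hw.1 _ (hF.connectedComponentIn (x := w))
    (mem_connectedComponentIn hwF)
  have heq := (connectedComponentIn_eq hyz).trans (connectedComponentIn_eq hyw).symm
  apply hw.2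
  rw [(hF.connectedComponentIn).interior_eq, heq]
  exact mem_connectedComponentIn hwF

lemma isBounded_preimage_ball {f : ℂ → ℂ} (hf : Differentiable ℂ f) {F : Set ℂ} (hF : IsOpen F)
    (hb : ∀ z ∈ F, Bornology.IsBounded (connectedComponentIn F z)) {a : ℂ} {r : ℝ} (hr : 0 < r)
    (hsub : f ⁻¹' Metric.ball a r ⊆ F) (hfin : (f ⁻¹' {a}).Finite) :
    Bornology.IsBounded (f ⁻¹' Metric.ball a r) := by
  have hzF : f ⁻¹' {a} ⊆ F := fun b hb' =>
    hsub (by rw [mem_preimage, show f b = a from hb']; exact Metric.mem_ball_self hr)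
  refine ((Bornology.isBounded_biUnion hfin).2 fun b hb' => hb b (hzF hb')).subset ?_
  intro z hz
  obtain ⟨b, hbV, hb0⟩ := exists_zero_of_le_on_frontier (g := fun w => f w - a) (hf.sub_const a)
    (hb z (hsub hz)) hr (fun w hw => by
      by_contra! hlt
      exact notMem_of_mem_frontier_connectedComponentIn hF z hw
        (hsub (by simpa [dist_eq_norm] using hlt)))
    (mem_connectedComponentIn (hsub hz)) (by simpa [dist_eq_norm] using hz)
  refine mem_iUnion₂.2 ⟨b, sub_eq_zero.1 hb0, ?_⟩
  rw [← connectedComponentIn_eq hbV]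
  exact mem_connectedComponentIn (hsub hz)

theorem exceptional_value_mem_julia_of_no_unbounded_component
    (f : ℂ → ℂ) (hf : IsTransEntire f)
    (hb : ∀ z ∈ FatouSet (cyclic f),
      Bornology.IsBounded (connectedComponentIn (FatouSet (cyclic f)) z)) :
    ∀ a : ℂ, (⋃ n : ℕ, ⋃ (_ : 1 ≤ n), f^[n] ⁻¹' {a}).Finite →
      a ∈ JuliaSet (cyclic f) := by
  intro a ha haF
  obtain ⟨hfd, hpoly⟩ := hf
  have hfin : (f ⁻¹' {a}).Finite := ha.subset fun z hz => mem_iUnion₂.2 ⟨1, le_rfl, hz⟩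
  have hopen := isOpen_fatouSet (cyclic f)
  obtain ⟨r, hr, hball⟩ := Metric.isOpen_iff.1 hopen a haF
  have hbdd := isBounded_preimage_ball hfd hopen hb hr
    (fun z hz => mem_fatouSet_of_map_mem hfd.continuous (hball hz)) hfin
  have hfar : ∀ᶠ z in Bornology.cobounded ℂ, r ≤ ‖f z - a‖ := by
    filter_upwards [Bornology.isBounded_def.1 hbdd] with z hz
    simpa [dist_eq_norm] using hz
  obtain ⟨C, k, hgrowth⟩ := exists_growth_of_bounded_below hfd hr hfar
  exact hpoly (exists_polynomial_of_growth hfd hgrowth)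
end
end

section
/- Let S be a transcendental semigroup and let z ∈ ℂ be a point not in the exceptional set E(S), i.e., the backward orbit O⁻(z) = {w ∈ ℂ : f(w) = z for some f ∈ S} is infinite. Then J(S) ⊆ closure(O⁻(z)). -/
/-!
Every point `w` outside `closure (backwardOrbit S z)` has a disc `D` around it that misses the
backward orbit of `z`. If `p` lies in the backward orbit, say `g p = z`, then no `f ∈ S` takes the
value `p` on `D`: from `f u = p` it would follow that `(g ∘ f) u = z`, so `u` would lie in the
backward orbit. Since the orbit is infinite, all members of `S` omit two common values on `D`, and
Montel's theorem makes `S` normal at `w`. Neither transcendence nor more than two points of the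
orbit are needed.

The bulk of the file proves Montel's theorem (`montel`) by the Bloch-Landau-Schottky route.

* `bloch`: if the values omitted by `h` on a disc of radius `R` meet every closed disc of radius
  `K`, then `R * ‖deriv h c‖ ≤ 96 * K` at the centre `c`.
* `schottky_aux`: a function `f` omitting `0` and `1` on a disc can be written as
  `exp (2πi F)` with `F = (1 + cosh G) / 2`, where `G` omits every `q` for which `cosh q` is an odd
  integer. These `q` are `6`-dense (`exists_near_cosh_odd`), so `bloch` bounds `G'`, hence `G`, hence
  `f`, in terms of the value at the centre.
* `schottky`: the resulting bound on the half disc depends only on an upper bound for `‖f c‖`.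

Given a sequence in `S`, either its values at `w` are bounded along a subsequence, and then Schottky
and Arzelà-Ascoli (`exists_subseq`) give a convergent subsequence; or its values at `w` tend to `∞`,
and then Schottky centred at nearby points `u` shows that the values at `u` tend to `∞` uniformly.
-/

open Filter Topology Set
noncomputable section

/-! ### Holomorphic logarithms on a disc -/

/-- A zero-free holomorphic function on a disc has a holomorphic logarithm with any prescribed
admissible value at the centre: take a primitive of `f' / f`. -/
lemma exists_log {c w : ℂ} {R : ℝ} (hR : 0 < R) {f : ℂ → ℂ}
    (hf : DifferentiableOn ℂ f (Metric.ball c R))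
    (h0 : ∀ z ∈ Metric.ball c R, f z ≠ 0) (hw : Complex.exp w = f c) :
    ∃ g : ℂ → ℂ, DifferentiableOn ℂ g (Metric.ball c R) ∧
      (∀ z ∈ Metric.ball c R, Complex.exp (g z) = f z) ∧ g c = w := by
  have hd : DifferentiableOn ℂ (fun z => deriv f z / f z) (Metric.ball c R) :=
    (hf.deriv Metric.isOpen_ball).div hf h0
  obtain ⟨g, hgc, hg⟩ := hd.isExactOn_ball.with_val_at c w
  refine ⟨g, fun z hz => (hg z hz).differentiableAt.differentiableWithinAt, ?_, hgc⟩
  have hc : c ∈ Metric.ball c R := Metric.mem_ball_self hR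
  have hder : ∀ z ∈ Metric.ball c R,
      HasDerivAt (fun z => f z * Complex.exp (-g z)) 0 z := by
    intro z hz
    have h1 := (hf.differentiableAt (Metric.isOpen_ball.mem_nhds hz)).hasDerivAt
    convert! h1.mul ((hg z hz).neg.cexp) using 1
    field_simp [h0 z hz]
    ring
  intro z hz
  have := Metric.isOpen_ball.is_const_of_deriv_eq_zero
    (convex_ball c R).isPreconnected
    (fun z hz => (hder z hz).differentiableAt.differentiableWithinAt)
    (fun z hz => (hder z hz).deriv) hz hc
  simp only [hgc, Complex.exp_neg, hw] at this
  rw [mul_inv_cancel₀ (h0 c hc), mul_inv_eq_one₀ (Complex.exp_ne_zero _)] at this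
  exact this.symm

/-! ### Points where `cosh` is an odd integer -/

/-- On `[x, x + 2]` with `0 ≤ x` the function `cosh` grows by at least `2`, so it passes through an
odd integer. -/
lemma exists_cosh_odd_real {x : ℝ} (hx : 0 ≤ x) :
    ∃ y ∈ Icc x (x + 2), ∃ m : ℤ, Real.cosh y = 2 * m - 1 := by
  have h1 : Real.cosh x + 2 ≤ Real.cosh (x + 2) := by
    have e : Real.cosh (x + 2) - Real.cosh x = 2 * Real.sinh (x+1) * Real.sinh 1 := by
      have a : x + 2 = (x + 1) + 1 := by ring
      have b : x = (x + 1) - 1 := by ring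
      rw [a, Real.cosh_add]
      conv_lhs => rw [b, Real.cosh_sub]
      ring_nf
    have s1 : 1 ≤ Real.sinh 1 := Real.self_le_sinh_iff.2 zero_le_one
    have s2 : 1 ≤ Real.sinh (x+1) := le_trans (by linarith) (Real.self_le_sinh_iff.2 (by linarith : 0 ≤ x + 1))
    nlinarith
  obtain ⟨m, hm⟩ : ∃ m : ℤ, Real.cosh x ≤ 2 * m - 1 ∧ (2 * m - 1 : ℝ) ≤ Real.cosh x + 2 := by
    refine ⟨⌈(Real.cosh x + 1) / 2⌉, ?_, ?_⟩
    · linarith [Int.le_ceil ((Real.cosh x + 1) / 2)]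
    · linarith [Int.ceil_lt_add_one ((Real.cosh x + 1) / 2)]
  obtain ⟨y, hy, hcosh⟩ := intermediate_value_Icc (by linarith : x ≤ x + 2)
    Real.continuous_cosh.continuousOn ⟨hm.1, hm.2.trans h1⟩
  exact ⟨y, hy, m, hcosh⟩

/-- The points where `cosh` is an odd integer form a `6`-dense subset of `ℂ`: move at most `2` in the
real direction, and use the period `2πi` in the imaginary direction. -/
lemma exists_near_cosh_odd (p : ℂ) :
    ∃ q : ℂ, ‖q - p‖ ≤ 6 ∧ ∃ m : ℤ, Complex.cosh q = 2 * m - 1 := by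
  obtain ⟨y, hy, m, hm⟩ : ∃ y : ℝ, |y - p.re| ≤ 2 ∧ ∃ m : ℤ, Real.cosh y = 2 * m - 1 := by
    rcases le_total 0 p.re with h | h
    · obtain ⟨y, hy, m, hm⟩ := exists_cosh_odd_real h
      exact ⟨y, abs_le.2 ⟨by linarith [hy.1], by linarith [hy.2]⟩, m, hm⟩
    · obtain ⟨y, hy, m, hm⟩ := exists_cosh_odd_real (neg_nonneg.2 h)
      exact ⟨-y, abs_le.2 ⟨by linarith [hy.2], by linarith [hy.1]⟩, m, by rw [Real.cosh_neg, hm]⟩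
  have hpi := Real.pi_pos
  set k : ℤ := round (p.im / (2 * Real.pi)) with hk
  have hk' : |k * (2 * Real.pi) - p.im| ≤ 4 := by
    have h := abs_sub_round (p.im / (2 * Real.pi))
    have e : (k * (2 * Real.pi) - p.im : ℝ) = -(p.im / (2 * Real.pi) - k) * (2 * Real.pi) := by
      field_simp; ring
    rw [e, abs_mul, abs_neg, abs_of_pos (by positivity : 0 < 2 * Real.pi)]
    nlinarith [Real.pi_lt_four]
  refine ⟨y + k * (2 * Real.pi) * Complex.I, ?_, m, ?_⟩
  · refine (Complex.norm_le_abs_re_add_abs_im _).trans ?_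
    have e1 : ((y + k * (2 * Real.pi) * Complex.I : ℂ) - p).re = y - p.re := by simp
    have e2 : ((y + k * (2 * Real.pi) * Complex.I : ℂ) - p).im = k * (2 * Real.pi) - p.im := by simp
    rw [e1, e2]; linarith
  · have : Complex.cosh (y + k * (2 * Real.pi) * Complex.I) = Complex.cosh y := by
      rw [Complex.cosh_add]
      have a1 : Complex.cosh (k * (2 * Real.pi) * Complex.I) = 1 := by
        rw [Complex.cosh_mul_I]; exact Complex.cos_int_mul_two_pi k
      have a2 : Complex.sinh (k * (2 * Real.pi) * Complex.I) = 0 := by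
        rw [Complex.sinh_mul_I]
        have : Complex.sin (k * (2 * Real.pi)) = 0 := by
          have := Complex.sin_int_mul_pi (k * 2)
          rw [← this]; push_cast; ring_nf
        simp [this]
      rw [a1, a2]; simp
    rw [this, ← Complex.ofReal_cosh, hm]; push_cast; ring

/-! ### Bloch's theorem -/

/-- Bloch's theorem, in contrapositive form: a large derivative at the centre forces the image to
contain a large disc. As usual one passes to a point `a` maximizing `(r - |z - c|) |h' z|`; near it
`|h'| ≤ 2 |h' a|`, so `h` is close to its linear part there and covers a definite disc. -/
lemma bloch {c : ℂ} {R K : ℝ} (hR : 0 < R) (hK : 0 ≤ K) {h : ℂ → ℂ}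
    (hh : DifferentiableOn ℂ h (Metric.ball c R))
    (hom : ∀ p : ℂ, ∃ q : ℂ, ‖q - p‖ ≤ K ∧ ∀ z ∈ Metric.ball c R, h z ≠ q) :
    R * ‖deriv h c‖ ≤ 96 * K := by
  by_cases h0 : deriv h c = 0
  · simp [h0]; positivity
  have hpos : 0 < ‖deriv h c‖ := norm_pos_iff.2 h0
  have hd : DifferentiableOn ℂ (deriv h) (Metric.ball c R) := hh.deriv Metric.isOpen_ball
  -- The smaller radius `r` makes the quantity to be maximized continuous on a compact disc.
  set r := R / 2 with hr
  have hr0 : 0 < r := by positivity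
  have hsub : Metric.closedBall c r ⊆ Metric.ball c R :=
    Metric.closedBall_subset_ball (by linarith)
  obtain ⟨a, ha, hmax⟩ := (isCompact_closedBall c r).exists_isMaxOn
    (Metric.nonempty_closedBall.2 hr0.le)
    (f := fun z => (r - dist z c) * ‖deriv h z‖)
    ((continuous_const.sub (continuous_id.dist continuous_const)).continuousOn.mul
      (hd.continuousOn.mono hsub).norm)
  have hmax' : ∀ z ∈ Metric.closedBall c r, (r - dist z c) * ‖deriv h z‖ ≤ (r - dist a c) * ‖deriv h a‖ :=
    fun z hz => hmax hz
  have hca := hmax' c (Metric.mem_closedBall_self hr0.le)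
  rw [dist_self, sub_zero] at hca
  have hpa : 0 < (r - dist a c) * ‖deriv h a‖ := lt_of_lt_of_le (by positivity) hca
  have hra : 0 < r - dist a c := pos_of_mul_pos_left hpa (norm_nonneg _)
  have hda : 0 < ‖deriv h a‖ := pos_of_mul_pos_right hpa hra.le
  set D := ‖deriv h a‖ with hD
  set ρ := (r - dist a c) / 2 with hρ
  have hρ0 : 0 < ρ := by positivity
  have hin : ∀ z ∈ Metric.closedBall a ρ, z ∈ Metric.closedBall c r := by
    intro z hz
    rw [Metric.mem_closedBall] at *
    linarith [dist_triangle z a c]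
  have hb : ∀ z ∈ Metric.closedBall a ρ, ‖deriv h z‖ ≤ 2 * D := by
    intro z hz
    have h1 := hmax' z (hin z hz)
    have h2 : ρ ≤ r - dist z c := by
      rw [Metric.mem_closedBall] at hz
      linarith [dist_triangle z a c]
    have h3 : ρ * ‖deriv h z‖ ≤ ρ * (2 * D) := by
      calc ρ * ‖deriv h z‖ ≤ (r - dist z c) * ‖deriv h z‖ := by gcongr
        _ ≤ _ := h1
        _ = _ := by rw [hρ]; ring
    exact le_of_mul_le_mul_left h3 hρ0
  have hball : Metric.ball a ρ ⊆ Metric.ball c R :=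
    fun z hz => hsub (hin z (Metric.ball_subset_closedBall hz))
  -- Schwarz lemma for `h' - h' a`, which is bounded by `3 D`.
  have hS : ∀ z ∈ Metric.ball a ρ, ‖deriv h z - deriv h a‖ ≤ 3 * D / ρ * dist z a := by
    intro z hz
    rw [← dist_eq_norm]
    refine Complex.dist_le_div_mul_dist_of_mapsTo_ball (hd.mono hball) ?_ hz
    intro y hy
    rw [Metric.mem_closedBall, dist_eq_norm]
    linarith [norm_sub_le (deriv h y) (deriv h a), hb y (Metric.ball_subset_closedBall hy)]
  -- The radius for which the Lipschitz constant `3 D s / ρ` of the nonlinear part equals `D / 2`.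
  set s := ρ / 6 with hs
  have hs0 : 0 < s := by positivity
  have hsρ : Metric.closedBall a s ⊆ Metric.ball a ρ :=
    Metric.closedBall_subset_ball (by linarith)
  have hlin : ∀ z ∈ Metric.closedBall a s, ‖h z - h a - deriv h a * (z - a)‖ ≤ D / 2 * ‖z - a‖ := by
    intro z hz
    have := (convex_closedBall a s).norm_image_sub_le_of_norm_hasDerivWithin_le
      (f := fun y => h y - deriv h a * (y - a)) (f' := fun y => deriv h y - deriv h a * 1)
      (C := D / 2) (x := a) (y := z) ?_ ?_ (Metric.mem_closedBall_self hs0.le) hz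
    · simp only [sub_self, mul_zero, sub_zero] at this
      rwa [sub_right_comm] at this
    · intro y hy
      have hy' := hball (hsρ hy)
      exact ((hh.differentiableAt (Metric.isOpen_ball.mem_nhds hy')).hasDerivAt.sub
        (((hasDerivAt_id y).sub_const a).const_mul _)).hasDerivWithinAt
    · intro y hy
      rw [mul_one]
      refine (hS y (hsρ hy)).trans ?_
      calc 3 * D / ρ * dist y a ≤ 3 * D / ρ * s := by gcongr; exact hy
        _ = D / 2 := by rw [hs]; field_simp; norm_num
  have hcov := DiffContOnCl.ball_subset_image_closedBall (f := h) (z₀ := a) (r := s)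
    (ε := D * s / 2) ?_ hs0 ?_ ?_
  · obtain ⟨q, hq, hq'⟩ := hom (h a)
    have hnot : ¬ ‖q - h a‖ < D * s / 2 / 2 := by
      intro hlt
      obtain ⟨z, hz, hz'⟩ := hcov (mem_ball_iff_norm.2 hlt)
      exact hq' z (hball (hsρ hz)) hz'
    have : D * s / 2 / 2 ≤ K := (not_lt.1 hnot).trans hq
    have e : (r - dist a c) * D = 48 * (D * s / 2 / 2) := by rw [hs, hρ]; ring
    rw [e] at hca
    have : R * ‖deriv h c‖ = 2 * (r * ‖deriv h c‖) := by rw [hr]; ring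
    linarith
  · refine DifferentiableOn.diffContOnCl ?_
    rw [closure_ball a hs0.ne']
    exact hh.mono (hsρ.trans hball)
  · intro z hz
    have hz1 : ‖z - a‖ = s := by simpa [dist_eq_norm] using hz
    have h1 := hlin z (Metric.sphere_subset_closedBall hz)
    have h2 := norm_sub_norm_le (deriv h a * (z - a)) (h z - h a)
    rw [norm_sub_rev (deriv h a * (z - a)), norm_mul, hz1, ← hD] at h2
    rw [hz1] at h1
    linarith
  · by_contra hcon
    rw [not_frequently] at hcon
    have he : h =ᶠ[𝓝 a] fun _ => h a := by
      filter_upwards [hcon] with z hz using not_not.1 hz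
    have := he.deriv_eq
    rw [deriv_const] at this
    rw [hD, this, norm_zero] at hda
    exact lt_irrefl _ hda

/-! ### Schottky's theorem -/

/-- Schottky's theorem for functions omitting `0` and `1` whose value at the centre is not too close
to `0`. The lower bound on `‖f c‖` keeps the chosen branch of `log f` bounded at the centre. -/
lemma schottky_aux {c : ℂ} {R M : ℝ} (hR : 0 < R) {f : ℂ → ℂ} (hM : 2 ≤ M)
    (hf : DifferentiableOn ℂ f (Metric.ball c R))
    (h0 : ∀ z ∈ Metric.ball c R, f z ≠ 0) (h1 : ∀ z ∈ Metric.ball c R, f z ≠ 1)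
    (hfl : 1 / 2 ≤ ‖f c‖) (hfu : ‖f c‖ ≤ M) {z : ℂ} (hz : z ∈ Metric.ball c (R / 2)) :
    ‖f z‖ ≤ Real.exp (Real.pi * (1 + Real.exp (4 * M + 592))) := by
  have hc : c ∈ Metric.ball c R := Metric.mem_ball_self hR
  have hpi := Real.pi_pos
  have hpi3 := Real.pi_gt_three
  have hpi4 := Real.pi_lt_four
  have h2pi : (2 * Real.pi * Complex.I : ℂ) ≠ 0 := Complex.two_pi_I_ne_zero
  have hIn : ‖(2 * Real.pi * Complex.I : ℂ)‖ = 2 * Real.pi := by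
    simp [abs_of_pos hpi]
  obtain ⟨L, hLd, hL, hLc⟩ := exists_log hR hf h0 (Complex.exp_log (h0 c hc))
  have hLcn : ‖L c‖ ≤ M + 4 := by
    rw [hLc]
    refine (Complex.norm_le_abs_re_add_abs_im _).trans ?_
    rw [Complex.log_re, Complex.log_im]
    have a1 : |Real.log ‖f c‖| ≤ M := by
      rw [abs_le]
      constructor
      · have := Real.one_sub_inv_le_log_of_pos (by linarith : 0 < ‖f c‖)
        have h3 : ‖f c‖⁻¹ ≤ 2 := by
          rw [inv_le_comm₀ (by linarith) two_pos]; linarith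
        linarith
      · have := Real.log_le_sub_one_of_pos (by linarith : 0 < ‖f c‖)
        linarith
    linarith [Complex.abs_arg_le_pi (f c)]
  set F : ℂ → ℂ := fun z => L z / (2 * Real.pi * Complex.I) with hF
  have hFd : DifferentiableOn ℂ F (Metric.ball c R) := hLd.div_const _
  have hFf : ∀ z ∈ Metric.ball c R, f z = Complex.exp (F z * (2 * Real.pi * Complex.I)) := by
    intro z hz
    rw [hF, ← hL z hz]; simp only; rw [div_mul_cancel₀ _ h2pi]
  have hFint : ∀ z ∈ Metric.ball c R, ∀ m : ℤ, F z ≠ m := by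
    intro z hz m hm
    apply h1 z hz
    rw [hFf z hz, hm]
    exact Complex.exp_int_mul_two_pi_mul_I m
  have hFcn : ‖F c‖ ≤ M := by
    rw [hF]; simp only
    rw [norm_div, hIn, div_le_iff₀ (by positivity)]
    nlinarith
  have hF0 : ∀ z ∈ Metric.ball c R, F z ≠ 0 := fun z hz => by simpa using hFint z hz 0
  have hF1 : ∀ z ∈ Metric.ball c R, F z - 1 ≠ 0 := fun z hz => by
    have := hFint z hz 1
    rw [Int.cast_one] at this
    exact sub_ne_zero.2 this
  -- `u` and `v` are square roots of `F` and `F - 1`, so that `(u + v) (u - v) = 1`, and `u = cosh H`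
  -- for any logarithm `H` of `u + v`.
  obtain ⟨lu, hlud, hlu, -⟩ := exists_log hR hFd hF0 (Complex.exp_log (hF0 c hc))
  obtain ⟨lv, hlvd, hlv, -⟩ := exists_log hR (hFd.sub_const 1) hF1 (Complex.exp_log (hF1 c hc))
  set u : ℂ → ℂ := fun z => Complex.exp (lu z / 2) with hu
  set v : ℂ → ℂ := fun z => Complex.exp (lv z / 2) with hv
  have hud : DifferentiableOn ℂ u (Metric.ball c R) := (hlud.div_const 2).cexp
  have hvd : DifferentiableOn ℂ v (Metric.ball c R) := (hlvd.div_const 2).cexp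
  have hu2 : ∀ z ∈ Metric.ball c R, u z ^ 2 = F z := fun z hz => by
    rw [← hlu z hz, hu]; simp only
    rw [← Complex.exp_nat_mul]; congr 1; push_cast; ring
  have hv2 : ∀ z ∈ Metric.ball c R, v z ^ 2 = F z - 1 := fun z hz => by
    rw [← hlv z hz, hv]; simp only
    rw [← Complex.exp_nat_mul]; congr 1; push_cast; ring
  have huv : ∀ z ∈ Metric.ball c R, (u z + v z) * (u z - v z) = 1 := fun z hz => by
    linear_combination hu2 z hz - hv2 z hz
  have hw0 : ∀ z ∈ Metric.ball c R, u z + v z ≠ 0 := fun z hz =>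
    left_ne_zero_of_mul_eq_one (huv z hz)
  obtain ⟨H, hHd, hH, hHc⟩ := exists_log hR (hud.add hvd) hw0 (Complex.exp_log (hw0 c hc))
  have hucn : ‖u c‖ ≤ M + 1 := by
    have : ‖u c‖ ^ 2 ≤ M := by rw [← norm_pow, hu2 c hc]; exact hFcn
    nlinarith [norm_nonneg (u c)]
  have hvcn : ‖v c‖ ≤ M + 1 := by
    have : ‖v c‖ ^ 2 ≤ M + 1 := by
      rw [← norm_pow, hv2 c hc]
      refine (norm_sub_le _ _).trans ?_
      simpa using hFcn
    nlinarith [norm_nonneg (v c)]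
  have hHcn : ‖H c‖ ≤ 2 * M + 6 := by
    rw [hHc]
    refine (Complex.norm_le_abs_re_add_abs_im _).trans ?_
    rw [Complex.log_re, Complex.log_im, Pi.add_apply]
    have hp : 0 < ‖u c + v c‖ := norm_pos_iff.2 (hw0 c hc)
    have hinv : ‖u c + v c‖⁻¹ = ‖u c - v c‖ := by
      rw [← norm_inv, inv_eq_of_mul_eq_one_right (huv c hc)]
    have a1 : |Real.log ‖u c + v c‖| ≤ 2 * M + 2 := by
      rw [abs_le]
      constructor
      · have := Real.one_sub_inv_le_log_of_pos hp
        rw [hinv] at this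
        linarith [norm_sub_le (u c) (v c)]
      · have := Real.log_le_sub_one_of_pos hp
        linarith [norm_add_le (u c) (v c)]
    linarith [Complex.abs_arg_le_pi (u c + v c)]
  set G : ℂ → ℂ := fun z => 2 * H z with hG
  have hGd : DifferentiableOn ℂ G (Metric.ball c R) := hHd.const_mul 2
  have hGF : ∀ z ∈ Metric.ball c R, F z = (1 + Complex.cosh (G z)) / 2 := by
    intro z hz
    have e1 : Complex.exp (H z) = u z + v z := hH z hz
    have e2 : Complex.exp (-H z) = u z - v z := by
      rw [Complex.exp_neg, e1]; exact inv_eq_of_mul_eq_one_right (huv z hz)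
    have e3 : Complex.cosh (H z) = u z := by
      rw [Complex.cosh, e1, e2]; ring
    have e4 := Complex.cosh_two_mul (H z)
    have e5 := Complex.cosh_sq (H z)
    rw [hG]; simp only
    rw [e4, ← hu2 z hz, ← e3]
    linear_combination e5 / 2
  have hGcn : ‖G c‖ ≤ 4 * M + 12 := by
    rw [hG]; simp only
    rw [norm_mul, Complex.norm_two]; linarith
  have hom : ∀ p : ℂ, ∃ q : ℂ, ‖q - p‖ ≤ 6 ∧ ∀ z ∈ Metric.ball c R, G z ≠ q := by
    intro p
    obtain ⟨q, hq, m, hm⟩ := exists_near_cosh_odd p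
    refine ⟨q, hq, fun z hz hzq => hFint z hz m ?_⟩
    rw [hGF z hz, hzq, hm]; ring
  have hder : ∀ y ∈ Metric.ball c (R / 2), ‖deriv G y‖ ≤ 96 * 6 / (R / 2) := by
    intro y hy
    have hsub : Metric.ball y (R / 2) ⊆ Metric.ball c R :=
      Metric.ball_subset_ball' (by rw [Metric.mem_ball] at hy; linarith)
    rw [le_div_iff₀ (by positivity), mul_comm]
    refine bloch (by positivity) (by norm_num) (hGd.mono hsub) fun p => ?_
    obtain ⟨q, hq, hq'⟩ := hom p
    exact ⟨q, hq, fun z hz => hq' z (hsub hz)⟩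
  have hhalf : Metric.ball c (R / 2) ⊆ Metric.ball c R := Metric.ball_subset_ball (by linarith)
  have hGz : ‖G z‖ ≤ 4 * M + 592 := by
    have := (convex_ball c (R / 2)).norm_image_sub_le_of_norm_deriv_le (f := G)
      (fun x hx => hGd.differentiableAt (Metric.isOpen_ball.mem_nhds (hhalf hx))) hder
      (Metric.mem_ball_self (by positivity)) hz
    have h2 : 96 * 6 / (R / 2) * ‖z - c‖ ≤ 96 * 6 := by
      rw [div_mul_eq_mul_div, div_le_iff₀ (by positivity)]
      have := (mem_ball_iff_norm.1 hz).le
      gcongr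
    have h3 := norm_le_norm_add_norm_sub' (G z) (G c)
    linarith
  have hcosh : ‖Complex.cosh (G z)‖ ≤ Real.exp (4 * M + 592) := by
    rw [Complex.cosh, norm_div, Complex.norm_two]
    have a1 := Complex.norm_exp_le_exp_norm (G z)
    have a2 := Complex.norm_exp_le_exp_norm (-G z)
    rw [norm_neg] at a2
    have a3 := Real.exp_le_exp.2 hGz
    have a4 := norm_add_le (Complex.exp (G z)) (Complex.exp (-G z))
    linarith
  rw [hFf z (hhalf hz), hGF z (hhalf hz)]
  refine (Complex.norm_exp_le_exp_norm _).trans (Real.exp_le_exp.2 ?_)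
  rw [norm_mul, hIn, norm_div, Complex.norm_two]
  have a5 := norm_add_le 1 (Complex.cosh (G z))
  rw [norm_one] at a5
  nlinarith

/-- Schottky's theorem: a holomorphic function omitting `a` and `b` on a disc is bounded on the
concentric half disc by a constant depending only on `a`, `b` and an upper bound for its modulus at
the centre. -/
lemma schottky {a b : ℂ} (hab : a ≠ b) (M : ℝ) : ∃ C : ℝ, ∀ (c : ℂ) (R : ℝ) (f : ℂ → ℂ), 0 < R →
    DifferentiableOn ℂ f (Metric.ball c R) → (∀ z ∈ Metric.ball c R, f z ≠ a) →
    (∀ z ∈ Metric.ball c R, f z ≠ b) → ‖f c‖ ≤ M →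
    ∀ z ∈ Metric.ball c (R / 2), ‖f z‖ ≤ C := by
  have hba : b - a ≠ 0 := sub_ne_zero.2 hab.symm
  set N : ℝ := max 2 ((M + ‖a‖) / ‖b - a‖) with hN
  have hN2 : 2 ≤ N := le_max_left _ _
  set C := Real.exp (Real.pi * (1 + Real.exp (4 * N + 592)))
  refine ⟨‖a‖ + ‖b - a‖ * (1 + C), fun c R f hR hf ha hb hM z hz => ?_⟩
  set g : ℂ → ℂ := fun z => (f z - a) / (b - a) with hg
  have hgd : DifferentiableOn ℂ g (Metric.ball c R) := (hf.sub_const a).div_const _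
  have hg0 : ∀ z ∈ Metric.ball c R, g z ≠ 0 := fun z hz =>
    div_ne_zero (sub_ne_zero.2 (ha z hz)) hba
  have hg1 : ∀ z ∈ Metric.ball c R, g z ≠ 1 := fun z hz h => by
    rw [hg] at h; simp only at h
    rw [div_eq_one_iff_eq hba] at h
    exact hb z hz (sub_left_injective h)
  have hgc : ‖g c‖ ≤ N := by
    refine le_trans ?_ (le_max_right _ _)
    rw [hg]; simp only
    rw [norm_div]
    gcongr
    exact (norm_sub_le _ _).trans (by linarith)
  have hgz : ‖g z‖ ≤ 1 + C := by
    by_cases h : 1 / 2 ≤ ‖g c‖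
    · linarith [schottky_aux hR hN2 hgd hg0 hg1 h hgc hz]
    · -- If `g c` is close to `0`, then `1 - g` still omits `0` and `1`, and is far from `0` at `c`.
      have t1 := norm_sub_norm_le 1 (g c)
      have t2 := norm_sub_le 1 (g c)
      rw [norm_one] at t1 t2
      have := schottky_aux (f := fun z => 1 - g z) hR hN2 (hgd.const_sub 1)
        (fun z hz => sub_ne_zero.2 (hg1 z hz).symm)
        (fun z hz h => hg0 z hz (by simpa using h)) (by linarith) (by linarith) hz
      have t3 := norm_sub_norm_le (g z) 1
      rw [norm_sub_rev, norm_one] at t3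
      linarith
  have e : f z = a + (b - a) * g z := by rw [hg]; field_simp; ring
  rw [e]
  refine (norm_add_le _ _).trans ?_
  rw [norm_mul]
  gcongr

/-! ### Montel's theorem -/

/-- A uniformly bounded sequence of holomorphic functions on a disc has a subsequence converging
uniformly on a smaller disc. The factor `1 / 5` ensures that any two points `x`, `y` of the smaller
disc satisfy `dist x y < R / 2` with `ball y (R / 2)` inside the original disc, so the Schwarz lemma
gives a common Lipschitz constant. -/
lemma exists_subseq {c : ℂ} {R C : ℝ} (hR : 0 < R) {F : ℕ → ℂ → ℂ}
    (hF : ∀ k, DifferentiableOn ℂ (F k) (Metric.ball c R))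
    (hC : ∀ k, ∀ z ∈ Metric.ball c R, ‖F k z‖ ≤ C) :
    ∃ φ : ℕ → ℕ, StrictMono φ ∧ ∃ g : ℂ → ℂ,
      TendstoUniformlyOn (F ∘ φ) g atTop (Metric.closedBall c (R / 5)) := by
  set K := Metric.closedBall c (R / 5) with hK
  have hKs : K ⊆ Metric.ball c R := Metric.closedBall_subset_ball (by linarith)
  have hLip : ∀ k, ∀ x ∈ K, ∀ y ∈ K, dist (F k x) (F k y) ≤ 2 * C / (R / 2) * dist x y := by
    intro k x hx y hy
    rw [hK, Metric.mem_closedBall] at hx hy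
    have hsub : Metric.ball y (R / 2) ⊆ Metric.ball c R := Metric.ball_subset_ball' (by linarith)
    refine Complex.dist_le_div_mul_dist_of_mapsTo_ball ((hF k).mono hsub) ?_ ?_
    · intro w hw
      rw [Metric.mem_closedBall, dist_eq_norm]
      have h1 := hC k w (hsub hw)
      have h2 := hC k y (hsub (Metric.mem_ball_self (by positivity)))
      linarith [norm_sub_le (F k w) (F k y)]
    · rw [Metric.mem_ball]
      linarith [dist_triangle_right x y c]
  classical
  have : CompactSpace K := isCompact_iff_compactSpace.1 (isCompact_closedBall c (R / 5))
  let B : ℕ → BoundedContinuousFunction K ℂ := fun k =>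
    BoundedContinuousFunction.mkOfCompact
      ⟨fun x => F k x, ((hF k).continuousOn.mono hKs).domRestrict⟩
  have hB : ∀ k (x : K), B k x = F k x := fun k x => rfl
  have hcomp : IsCompact (closure (range B)) := by
    refine BoundedContinuousFunction.arzela_ascoli (Metric.closedBall (0 : ℂ) C)
      (isCompact_closedBall _ _) _ ?_ ?_
    · rintro _ x ⟨k, rfl⟩
      rw [hB, mem_closedBall_zero_iff]
      exact hC k x (hKs x.2)
    · refine Metric.equicontinuous_of_continuity_modulus (fun t => 2 * C / (R / 2) * t) ?_ _ ?_
      · have : Continuous fun t : ℝ => 2 * C / (R / 2) * t := by fun_prop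
        simpa using this.tendsto 0
      · rintro x y ⟨_, k, rfl⟩
        exact hLip k x x.2 y y.2
  obtain ⟨G, -, φ, hφ, hG⟩ := hcomp.tendsto_subseq fun k => subset_closure (mem_range_self k)
  refine ⟨φ, hφ, fun z => if hz : z ∈ K then G ⟨z, hz⟩ else 0, ?_⟩
  rw [tendstoUniformlyOn_iff_tendstoUniformly_comp_coe]
  have := BoundedContinuousFunction.tendsto_iff_tendstoUniformly.1 hG
  convert! this using 1
  ext x
  simp

/-- Montel's theorem: a family of holomorphic functions on a disc omitting two common values is
normal at the centre. -/
theorem montel {S : Set (ℂ → ℂ)} {w a b : ℂ} {R : ℝ} (hR : 0 < R) (hab : a ≠ b)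
    (hS : ∀ f ∈ S, DifferentiableOn ℂ f (Metric.ball w R))
    (ha : ∀ f ∈ S, ∀ z ∈ Metric.ball w R, f z ≠ a)
    (hb : ∀ f ∈ S, ∀ z ∈ Metric.ball w R, f z ≠ b) : NormalAt S w := by
  refine ⟨Metric.closedBall w (R / 2 / 5), Metric.closedBall_mem_nhds _ (by positivity), ?_⟩
  intro F hF
  by_cases h : ∃ M : ℝ, ∃ᶠ k in atTop, ‖F k w‖ ≤ M
  · obtain ⟨M, hM⟩ := h
    obtain ⟨ψ, hψ, hψM⟩ := extraction_of_frequently_atTop hM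
    obtain ⟨C, hC⟩ := schottky hab M
    obtain ⟨φ, hφ, g, hg⟩ := exists_subseq (F := F ∘ ψ) (half_pos hR)
      (fun k => (hS _ (hF (ψ k))).mono (Metric.ball_subset_ball (by linarith)))
      (fun k => hC w R _ hR (hS _ (hF (ψ k))) (ha _ (hF _)) (hb _ (hF _)) (hψM k))
    exact ⟨ψ ∘ φ, hψ.comp hφ, Or.inl ⟨g, hg.tendstoLocallyUniformlyOn⟩⟩
  · -- If `‖F k u‖ < M` at some nearby `u`, Schottky's theorem centred at `u` bounds `‖F k w‖`, which
    -- is false for large `k`.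
    push Not at h
    refine ⟨id, strictMono_id, Or.inr fun K hK _ M => ?_⟩
    obtain ⟨C, hC⟩ := schottky hab M
    filter_upwards [h C] with k hk u hu
    by_contra hlt
    have huw := Metric.mem_closedBall.1 (hK hu)
    have hsub : Metric.ball u (R / 2) ⊆ Metric.ball w R := Metric.ball_subset_ball' (by linarith)
    have := hC u (R / 2) (F k) (half_pos hR) ((hS _ (hF k)).mono hsub)
      (fun z hz => ha _ (hF k) z (hsub hz)) (fun z hz => hb _ (hF k) z (hsub hz))
      (not_le.1 hlt).le w (by rw [Metric.mem_ball, dist_comm]; linarith)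
    exact absurd this (not_le.2 hk)

theorem julia_subset_closure_backward_orbit
    (S : Set (ℂ → ℂ)) (hS : IsTransSemigroup S) (z : ℂ)
    (hz : (backwardOrbit S z).Infinite) :
    JuliaSet S ⊆ closure (backwardOrbit S z) := by
  intro w hw
  by_contra hcl
  obtain ⟨R, hR, hball⟩ := Metric.isOpen_iff.1 isClosed_closure.isOpen_compl w hcl
  obtain ⟨a, ha, b, hb, hab⟩ := hz.nontrivial
  have key : ∀ p ∈ backwardOrbit S z, ∀ f ∈ S, ∀ u ∈ Metric.ball w R, f u ≠ p := by
    rintro p ⟨g, hg, rfl⟩ f hf u hu rfl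
    exact hball hu (subset_closure ⟨g ∘ f, hS.2.2 g hg f hf, rfl⟩)
  exact hw (montel hR hab (fun f hf => (hS.2.1 f hf).1.differentiableOn) (key a ha) (key b hb))
end
end

section
/- Let a ∈ ℂ with |a| > 1 and let S be the holomorphic semigroup generated by the polynomials p(z) = z² and q(z) = z²/a (i.e., the set of all finite compositions of p and q). Then F(S) = {z ∈ ℂ : |z| < 1} ∪ {z ∈ ℂ : |z| > |a|} and J(S) = {z ∈ ℂ : 1 ≤ |z| ≤ |a|}. -/
/-!
The semigroup consists of the monomials `z ^ N / a ^ m` with `N = 2 ^ n`, `n ≥ 1`, `0 ≤ m < N`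
(`exists_monomial_of_mem` keeps only `m < N`; `monomial_mem` shows that all of them occur).

In a sequence of such monomials either one monomial recurs infinitely often, which gives a constant
subsequence, or the degrees tend to `∞`. In the latter case, the bounds `‖z ^ N / a ^ m‖ ≤ ‖z‖ ^ N`
and `‖z ^ N / a ^ m‖ ≥ (‖z‖ / ‖a‖) ^ N` give uniform convergence to `0` on `‖z‖ < r < 1`, and uniform
divergence to `∞` on `‖z‖ > R > ‖a‖`. Hence both regions lie in the Fatou set.

If `1 ≤ ‖z‖ ≤ ‖a‖`, then `1 ≤ ‖z‖ ^ N ≤ ‖a‖ ^ N`, so for every `N = 2 ^ n` some `m < N` satisfies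
`‖a‖ ^ m ≤ ‖z‖ ^ N ≤ ‖a‖ ^ (m + 1)`. The corresponding monomials stay bounded at `z` but tend to
`∞` at `t z` for each `t > 1`, so no subsequence converges or diverges near `z` (`not_normalAt`).
-/

open Filter Topology Set

noncomputable section

/-- Every element of the semigroup is a monomial `z ^ N / a ^ m` with `m < N`; this form is stable
under composition because `m' * N + m < N' * N`. -/
theorem exists_monomial_of_mem {a : ℂ} {f : ℂ → ℂ}
    (hf : f ∈ genSemigroup {fun z => z ^ 2, fun z => z ^ 2 / a}) :
    ∃ N m : ℕ, m < N ∧ f = fun z => z ^ N / a ^ m := by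
  induction hf with
  | base h =>
    rcases h with rfl | rfl
    · exact ⟨2, 0, by norm_num, by simp⟩
    · exact ⟨2, 1, by norm_num, by simp⟩
  | comp _ _ ihf ihg =>
    obtain ⟨N, m, hm, rfl⟩ := ihf
    obtain ⟨N', m', hm', rfl⟩ := ihg
    refine ⟨N' * N, m' * N + m, by nlinarith, ?_⟩
    funext z
    simp only [Function.comp_apply, div_pow, pow_mul, pow_add, div_div]

/-- All the monomials `z ^ 2 ^ n / a ^ m` with `n ≥ 1` and `m < 2 ^ n` occur: composing with `p` or
`q` on the left appends a binary digit `0` or `1` to `m`. -/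
theorem monomial_mem (a : ℂ) (n : ℕ) : ∀ m < 2 ^ (n + 1),
    (fun z : ℂ => z ^ 2 ^ (n + 1) / a ^ m) ∈
      genSemigroup {fun z => z ^ 2, fun z => z ^ 2 / a} := by
  induction n with
  | zero =>
    intro m hm
    have hm2 : m < 2 := by simpa using hm
    interval_cases m
    · refine .base (Or.inl ?_)
      funext z
      simp
    · refine .base (Or.inr ?_)
      funext z
      simp
  | succ n ih =>
    intro m hm
    have hj : m / 2 < 2 ^ (n + 1) := by
      rw [pow_succ] at hm
      omega
    rcases Nat.even_or_odd' m with ⟨j, rfl | rfl⟩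
    · rw [show 2 * j / 2 = j by omega] at hj
      have hc := InGenSemigroup.comp (.base (Or.inl rfl)) (ih j hj)
      refine (congrArg (InGenSemigroup _) ?_).mp hc
      funext z
      simp only [Function.comp_apply, div_pow, ← pow_mul]
      ring
    · rw [show (2 * j + 1) / 2 = j by omega] at hj
      have hc := InGenSemigroup.comp (.base (Or.inr rfl)) (ih j hj)
      refine (congrArg (InGenSemigroup _) ?_).mp hc
      funext z
      simp only [Function.comp_apply, div_pow, ← pow_mul, div_div, ← pow_succ, mul_comm j]

/-- In a sequence of pairs `m k < N k`, either some pair recurs infinitely often or `N k → ∞`,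
since each value of `N` allows only finitely many values of `m`. -/
theorem frequently_eq_or_tendsto {N m : ℕ → ℕ} (h : ∀ k, m k < N k) :
    (∃ A b : ℕ, ∃ᶠ k in atTop, N k = A ∧ m k = b) ∨ Tendsto N atTop atTop := by
  by_cases hc : ∃ A b : ℕ, ∃ᶠ k in atTop, N k = A ∧ m k = b
  · exact Or.inl hc
  · right
    push Not at hc
    rw [tendsto_atTop]
    intro B
    have h1 : ∀ᶠ k in atTop, ∀ A ∈ Finset.range B, ∀ b ∈ Finset.range B, ¬ (N k = A ∧ m k = b) := by
      rw [Filter.eventually_all_finset]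
      intro A _
      rw [Filter.eventually_all_finset]
      intro b _
      simpa [Filter.Frequently] using hc A b
    filter_upwards [h1] with k hk
    by_contra hlt
    push Not at hlt
    exact hk (N k) (Finset.mem_range.2 hlt) (m k) (Finset.mem_range.2 ((h k).trans hlt)) ⟨rfl, rfl⟩

/-- It is enough to treat sequences of monomials whose degrees tend to `∞`. -/
theorem normalAt_of_tendsto {a z : ℂ} {U : Set ℂ} (hU : U ∈ 𝓝 z)
    (H : ∀ N m : ℕ → ℕ, (∀ k, m k < N k) → Tendsto N atTop atTop →
      ConvLocUnifOn (fun k z => z ^ N k / a ^ m k) U ∨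
        DivLocUnifOn (fun k z => z ^ N k / a ^ m k) U) :
    NormalAt (genSemigroup {fun z => z ^ 2, fun z => z ^ 2 / a}) z := by
  refine ⟨U, hU, fun F hF => ?_⟩
  choose N m hm hFe using fun k => exists_monomial_of_mem (hF k)
  rcases frequently_eq_or_tendsto hm with ⟨A, b, hfr⟩ | ht
  · obtain ⟨φ, hφ, he⟩ := extraction_of_frequently_atTop hfr
    refine ⟨φ, hφ, Or.inl ⟨fun z => z ^ A / a ^ b, ?_⟩⟩
    refine (fun u hu x _ => ⟨univ, univ_mem, Eventually.of_forall fun k y _ => ?_⟩)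
    simp only [Function.comp_apply, hFe, (he k).1, (he k).2]
    exact refl_mem_uniformity hu
  · refine ⟨id, strictMono_id, ?_⟩
    obtain rfl : F = fun k z => z ^ N k / a ^ m k := funext hFe
    exact H N m hm ht

theorem normalAt_of_norm_lt_one {a z : ℂ} (ha : 1 < ‖a‖) (hz : ‖z‖ < 1) :
    NormalAt (genSemigroup {fun z => z ^ 2, fun z => z ^ 2 / a}) z := by
  obtain ⟨r, hzr, hr⟩ := exists_between hz
  have hr0 : 0 ≤ r := (norm_nonneg z).trans hzr.le
  have hU : {w : ℂ | ‖w‖ < r} ∈ 𝓝 z := (isOpen_lt continuous_norm continuous_const).mem_nhds hzr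
  refine normalAt_of_tendsto hU fun N m hm hN => Or.inl ⟨fun _ => 0, ?_⟩
  apply TendstoUniformlyOn.tendstoLocallyUniformlyOn
  rw [Metric.tendstoUniformlyOn_iff]
  intro ε hε
  have h1 := ((tendsto_pow_atTop_nhds_zero_of_lt_one hr0 hr).comp hN).eventually (gt_mem_nhds hε)
  filter_upwards [h1] with k hk w hw
  rw [dist_zero_left, norm_div, norm_pow, norm_pow]
  calc ‖w‖ ^ N k / ‖a‖ ^ m k ≤ ‖w‖ ^ N k := div_le_self (by positivity) (one_le_pow₀ ha.le)
    _ ≤ r ^ N k := pow_le_pow_left₀ (norm_nonneg w) (le_of_lt hw) _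
    _ < ε := hk

theorem normalAt_of_lt_norm {a z : ℂ} (ha : 1 < ‖a‖) (hz : ‖a‖ < ‖z‖) :
    NormalAt (genSemigroup {fun z => z ^ 2, fun z => z ^ 2 / a}) z := by
  obtain ⟨R, haR, hzR⟩ := exists_between hz
  have ha0 : 0 < ‖a‖ := one_pos.trans ha
  have hU : {w : ℂ | R < ‖w‖} ∈ 𝓝 z := (isOpen_lt continuous_const continuous_norm).mem_nhds hzR
  refine normalAt_of_tendsto hU fun N m hm hN => Or.inr fun K hK _ M => ?_
  have h1 := ((tendsto_pow_atTop_atTop_of_one_lt ((one_lt_div ha0).2 haR)).comp hN).eventually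
    (eventually_ge_atTop M)
  filter_upwards [h1] with k hk w hw
  have hRw : R ≤ ‖w‖ := le_of_lt (hK hw)
  rw [norm_div, norm_pow, norm_pow]
  calc M ≤ (R / ‖a‖) ^ N k := hk
    _ = R ^ N k / ‖a‖ ^ N k := div_pow _ _ _
    _ ≤ ‖w‖ ^ N k / ‖a‖ ^ m k := by
      have : 0 ≤ R := (ha0.trans haR).le
      have := ha.le
      have := (hm k).le
      gcongr

theorem exists_pow_le_le_pow_succ {c x : ℝ} (hx : 1 ≤ x) (N : ℕ) (hxN : x ≤ c ^ (N + 1)) :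
    ∃ m < N + 1, c ^ m ≤ x ∧ x ≤ c ^ (m + 1) := by
  induction N with
  | zero => exact ⟨0, by norm_num, by simpa using hx, hxN⟩
  | succ N ih =>
    rcases le_total x (c ^ (N + 1)) with h | h
    · obtain ⟨m, hm, h1, h2⟩ := ih h
      exact ⟨m, by omega, h1, h2⟩
    · exact ⟨N + 1, by omega, h, hxN⟩

/-- At a point `z` of the closed annulus there are elements `F n` of the semigroup, of degree
`2 ^ (n + 1)`, with `1 ≤ ‖F n z‖ ≤ ‖a‖`. So `F n z` does not escape, while `F n (t z) → ∞` for every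
real `t > 1`; both behaviours occur in every neighbourhood of `z`. -/
theorem not_normalAt {a z : ℂ} (ha : 1 < ‖a‖) (hz1 : 1 ≤ ‖z‖) (hza : ‖z‖ ≤ ‖a‖) :
    ¬ NormalAt (genSemigroup {fun z => z ^ 2, fun z => z ^ 2 / a}) z := by
  rintro ⟨U, hU, H⟩
  have key : ∀ n : ℕ, ∃ m < 2 ^ (n + 1),
      ‖a‖ ^ m ≤ ‖z‖ ^ 2 ^ (n + 1) ∧ ‖z‖ ^ 2 ^ (n + 1) ≤ ‖a‖ ^ (m + 1) := by
    intro n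
    obtain ⟨N, hN⟩ : ∃ N, 2 ^ (n + 1) = N + 1 := Nat.exists_eq_succ_of_ne_zero (by positivity)
    rw [hN]
    exact exists_pow_le_le_pow_succ (one_le_pow₀ hz1) N
      (pow_le_pow_left₀ (norm_nonneg z) hza _)
  choose m hm hlo hhi using key
  have ha0 : 0 < ‖a‖ := one_pos.trans ha
  obtain ⟨φ, hφ, ⟨g, hg⟩ | hdiv⟩ := H (fun n w => w ^ 2 ^ (n + 1) / a ^ m n)
    (fun n => monomial_mem a n (m n) (hm n))
  · have hcont : Tendsto (fun t : ℝ => (t : ℂ) * z) (𝓝[>] 1) (𝓝 z) := by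
      have : Continuous fun t : ℝ => (t : ℂ) * z := by fun_prop
      simpa using (this.tendsto 1).mono_left nhdsWithin_le_nhds
    obtain ⟨t, htU, ht⟩ := ((hcont.eventually hU).and self_mem_nhdsWithin).exists
    have ht1 : 1 < t := ht
    have hlim := (hg.tendsto_at htU).norm
    have hdeg : Tendsto (fun k => 2 ^ (φ k + 1)) atTop (atTop : Filter ℕ) :=
      (tendsto_pow_atTop_atTop_of_one_lt one_lt_two).comp
        ((tendsto_add_atTop_nat 1).comp hφ.tendsto_atTop)
    refine not_tendsto_nhds_of_tendsto_atTop ?_ _ hlim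
    refine tendsto_atTop_mono (fun k => ?_)
      ((tendsto_pow_atTop_atTop_of_one_lt ht1).comp hdeg)
    simp only [Function.comp_apply, norm_div, norm_pow, norm_mul, Complex.norm_real,
      Real.norm_of_nonneg (zero_le_one.trans ht1.le)]
    rw [mul_pow, mul_div_assoc]
    exact le_mul_of_one_le_right (by positivity) ((one_le_div (by positivity)).2 (hlo _))
  · have hzU : ({z} : Set ℂ) ⊆ U := singleton_subset_iff.2 (mem_of_mem_nhds hU)
    obtain ⟨k, hk⟩ := (hdiv {z} hzU isCompact_singleton (‖a‖ + 1)).exists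
    have h1 := hk z rfl
    simp only [Function.comp_apply, norm_div, norm_pow] at h1
    have h2 : ‖z‖ ^ 2 ^ (φ k + 1) / ‖a‖ ^ m (φ k) ≤ ‖a‖ := by
      rw [div_le_iff₀ (by positivity), ← pow_succ']
      exact hhi _
    linarith

theorem fatou_julia_of_square_semigroup
    (a : ℂ) (ha : 1 < ‖a‖) :
    FatouSet (genSemigroup {fun z => z ^ 2, fun z => z ^ 2 / a}) =
        {z : ℂ | ‖z‖ < 1 ∨ ‖a‖ < ‖z‖} ∧
      JuliaSet (genSemigroup {fun z => z ^ 2, fun z => z ^ 2 / a}) =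
        {z : ℂ | 1 ≤ ‖z‖ ∧ ‖z‖ ≤ ‖a‖} := by
  have hF : FatouSet (genSemigroup {fun z => z ^ 2, fun z => z ^ 2 / a}) =
      {z : ℂ | ‖z‖ < 1 ∨ ‖a‖ < ‖z‖} := by
    ext z
    refine ⟨fun h => ?_, ?_⟩
    · by_contra hc
      simp only [mem_ofPred_eq, not_or, not_lt] at hc
      exact not_normalAt ha hc.1 hc.2 h
    · rintro (h | h)
      · exact normalAt_of_norm_lt_one ha h
      · exact normalAt_of_lt_norm ha h
  refine ⟨hF, ?_⟩
  rw [JuliaSet, hF]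
  ext z
  simp only [mem_compl_iff, mem_ofPred_eq, not_or, not_lt]
end
end

section
/- Let a ∈ ℂ with |a| > 1, let n ≥ 2 be an integer, and let S be the holomorphic semigroup generated by the infinite family of polynomials f_m(z) = a^m z^n for m ∈ ℕ. Then for each m the Julia set of the single map f_m is the circle J(f_m) = {z ∈ ℂ : |z| = |a|^{−m/(n−1)}}, the point 0 lies in the exceptional set E(S), and 0 ∈ J(S); in particular E(S) is not contained in F(S). -/
/-!
Put `r = ‖a‖ ^ (-m / (n - 1))`, so that `‖a‖ ^ m * r ^ n = r`. Then `f z = a ^ m * z ^ n` satisfies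
`‖f^[p] z‖ = r * (‖z‖ / r) ^ (n ^ p)` (`norm_iterate`). Hence the iterates tend to `0` uniformly
on smaller discs inside `‖z‖ < r` and to `∞` uniformly on the complements of larger discs, while at
a point of the circle `‖z‖ = r` they stay bounded although they blow up at points arbitrarily
close by. The last situation excludes normality (`not_normalAt_of_blowup`).

The same obstruction gives `0 ∈ J(S)`: the generators `a ^ k * z ^ n` all fix `0`, but tend to `∞`
as `k → ∞` at every `z ≠ 0`. Finally every element of `S` vanishes only at `0`, so the backward
orbit of `0` is contained in `{0}` and `0 ∈ E(S)`.
-/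

open Filter Topology Set

noncomputable section

/-- A family is not normal at `z` if some sequence of its members is bounded at `z`, yet tends to
`∞` at points arbitrarily close to `z`. -/
lemma not_normalAt_of_blowup {S : Set (ℂ → ℂ)} {z : ℂ} (F : ℕ → ℂ → ℂ) (hF : ∀ k, F k ∈ S)
    (C : ℝ) (hC : ∀ k, ‖F k z‖ ≤ C)
    (hw : ∃ᶠ w in 𝓝 z, Tendsto (fun k => ‖F k w‖) atTop atTop) : ¬ NormalAt S z := by
  rintro ⟨U, hU, h⟩
  obtain ⟨φ, hφ, hconv | hdiv⟩ := h F hF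
  · obtain ⟨g, hg⟩ := hconv
    obtain ⟨w, hwt, hwU⟩ := (hw.and_eventually hU).exists
    have h1 : Tendsto (fun k => ‖F (φ k) w‖) atTop (𝓝 ‖g w‖) := (hg.tendsto_at hwU).norm
    exact not_tendsto_nhds_of_tendsto_atTop (hwt.comp hφ.tendsto_atTop) _ h1
  · obtain ⟨k, hk⟩ := (hdiv {z} (by simpa using mem_of_mem_nhds hU) isCompact_singleton
      (C + 1)).exists
    have h1 : C + 1 ≤ ‖F (φ k) z‖ := hk z rfl
    linarith [hC (φ k)]

/-- To prove normality of the family of iterates, it suffices to treat sequences of iterates whose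
orders tend to `∞`: any other sequence takes one value infinitely often. -/
lemma normalAt_cyclic_of {f : ℂ → ℂ} {z : ℂ} {U : Set ℂ} (hU : U ∈ 𝓝 z)
    (h : ∀ p : ℕ → ℕ, Tendsto p atTop atTop →
      ConvLocUnifOn (fun k => f^[p k]) U ∨ DivLocUnifOn (fun k => f^[p k]) U) :
    NormalAt (cyclic f) z := by
  refine ⟨U, hU, fun F hF => ?_⟩
  choose p _ hp using hF
  obtain rfl : F = fun k => f^[p k] := funext hp
  by_cases hpt : Tendsto p atTop atTop
  · exact ⟨id, strictMono_id, h p hpt⟩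
  · obtain ⟨B, hB⟩ : ∃ B, ∃ᶠ k in atTop, p k < B := by
      simpa only [tendsto_atTop, not_forall, Filter.not_eventually, not_le] using hpt
    obtain ⟨b, hb⟩ : ∃ b, ∃ᶠ k in atTop, p k = b := by
      by_contra! hcon
      refine hB ?_
      have : ∀ᶠ k in atTop, ∀ b ∈ Finset.range B, p k ≠ b :=
        (Finset.eventually_all _).2 fun b _ => by simpa using hcon b
      filter_upwards [this] with k hk hlt
      exact hk _ (Finset.mem_range.2 hlt) rfl
    obtain ⟨φ, hφ, hφb⟩ := extraction_of_frequently_atTop hb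
    refine ⟨φ, hφ, Or.inl ⟨f^[b], ?_⟩⟩
    have : ((fun k => f^[p k]) ∘ φ) = fun _ => f^[b] := by
      funext k; simp [hφb k]
    rw [this]
    intro u hu x _
    exact ⟨univ, univ_mem, Eventually.of_forall fun _ y _ => refl_mem_uniformity hu⟩

lemma norm_iterate {c : ℂ} {n : ℕ} {r : ℝ} (hr : 0 < r) (hc : ‖c‖ * r ^ n = r) (p : ℕ) (z : ℂ) :
    ‖(fun z => c * z ^ n)^[p] z‖ = r * (‖z‖ / r) ^ n ^ p := by
  induction p with
  | zero => simp; field_simp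
  | succ p ih =>
    rw [Function.iterate_succ_apply', norm_mul, norm_pow, ih, mul_pow, ← mul_assoc, hc, ← pow_mul,
      pow_succ]

/-- The Julia set of `z ↦ c * z ^ n` is the invariant circle. -/
lemma juliaSet_monomial {c : ℂ} {n : ℕ} (hn : 2 ≤ n) {r : ℝ} (hr : 0 < r)
    (hc : ‖c‖ * r ^ n = r) : JuliaSet (cyclic fun z => c * z ^ n) = {z : ℂ | ‖z‖ = r} := by
  have hpow : Tendsto (fun p : ℕ => n ^ p) atTop atTop :=
    tendsto_pow_atTop_atTop_of_one_lt (by omega)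
  ext z
  rw [JuliaSet, FatouSet, mem_compl_iff, mem_ofPred_eq, mem_ofPred_eq]
  constructor
  · contrapose!
    intro hz
    rcases lt_or_gt_of_ne hz with hz | hz
    · obtain ⟨s, hzs, hsr⟩ := exists_between hz
      have hs : 0 < s := (norm_nonneg z).trans_lt hzs
      refine normalAt_cyclic_of (U := {w | ‖w‖ < s})
        ((isOpen_lt continuous_norm continuous_const).mem_nhds hzs) fun p hp =>
        Or.inl ⟨fun _ => 0, TendstoUniformlyOn.tendstoLocallyUniformlyOn ?_⟩
      have hlim : Tendsto (fun k => r * (s / r) ^ n ^ p k) atTop (𝓝 0) := by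
        simpa using ((tendsto_pow_atTop_nhds_zero_of_lt_one (by positivity)
          ((div_lt_one hr).2 hsr)).comp (hpow.comp hp)).const_mul r
      rw [Metric.tendstoUniformlyOn_iff]
      intro ε hε
      filter_upwards [hlim.eventually_lt_const hε] with k hk w hw
      rw [dist_zero_left, norm_iterate hr hc]
      refine lt_of_le_of_lt ?_ hk
      have : ‖w‖ ≤ s := le_of_lt hw
      gcongr
    · obtain ⟨s, hrs, hsz⟩ := exists_between hz
      have hs : 0 < s := hr.trans hrs
      refine normalAt_cyclic_of (U := {w | s < ‖w‖})
        ((isOpen_lt continuous_const continuous_norm).mem_nhds hsz) fun p hp => Or.inr ?_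
      intro K hK _ M
      have hlim : Tendsto (fun k => r * (s / r) ^ n ^ p k) atTop atTop :=
        ((tendsto_pow_atTop_atTop_of_one_lt ((one_lt_div hr).2 hrs)).comp
          (hpow.comp hp)).const_mul_atTop hr
      filter_upwards [hlim.eventually_ge_atTop M] with k hk w hw
      rw [norm_iterate hr hc]
      refine hk.trans ?_
      have : s ≤ ‖w‖ := le_of_lt (hK hw)
      gcongr
  · intro hz
    refine not_normalAt_of_blowup (fun k => (fun z => c * z ^ n)^[k + 1])
      (fun k => ⟨k + 1, k.succ_pos, rfl⟩) r (fun k => ?_) ?_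
    · rw [norm_iterate hr hc, hz, div_self hr.ne', one_pow, mul_one]
    · -- The points `t * z` with `t > 1` lie outside the circle and accumulate at `z`.
      have hcont : Tendsto (fun t : ℝ => (t : ℂ) * z) (𝓝[>] 1) (𝓝 z) := by
        have : Continuous fun t : ℝ => (t : ℂ) * z := by fun_prop
        simpa using (this.tendsto 1).mono_left nhdsWithin_le_nhds
      refine hcont.frequently (Eventually.frequently ?_)
      filter_upwards [self_mem_nhdsWithin] with t ht
      have ht : 1 < t := ht
      have hq : ‖(t : ℂ) * z‖ / r = t := by
        rw [norm_mul, hz, Complex.norm_real, Real.norm_of_nonneg (by linarith)]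
        field_simp
      simp only [norm_iterate hr hc, hq]
      exact ((tendsto_pow_atTop_atTop_of_one_lt ht).comp
        (hpow.comp (tendsto_add_atTop_nat 1))).const_mul_atTop hr

/-- `r = x ^ (-m / (n - 1))` is the radius of the circle invariant under `z ↦ c * z ^ n` when
`‖c‖ = x ^ m`. -/
lemma radius_eq {x : ℝ} (hx : 1 < x) {n : ℕ} (hn : 2 ≤ n) (m : ℕ) :
    x ^ m * (x ^ (-(m : ℝ) / ((n : ℝ) - 1))) ^ n = x ^ (-(m : ℝ) / ((n : ℝ) - 1)) := by
  have h0 : 0 < x := by linarith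
  have h1 : (n : ℝ) - 1 ≠ 0 := by
    have : (2 : ℝ) ≤ n := by exact_mod_cast hn
    linarith
  rw [← Real.rpow_natCast x m, ← Real.rpow_natCast _ n, ← Real.rpow_mul h0.le, ← Real.rpow_add h0]
  congr 1
  field_simp
  ring

theorem exceptional_set_not_subset_fatou_of_infinitely_generated
    (a : ℂ) (ha : 1 < ‖a‖) (n : ℕ) (hn : 2 ≤ n) :
    (∀ m : ℕ, JuliaSet (cyclic (fun z => a ^ m * z ^ n)) =
        {z : ℂ | ‖z‖ = ‖a‖ ^ (-(m : ℝ) / ((n : ℝ) - 1))}) ∧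
      (0 : ℂ) ∈ excSet (genSemigroup {f | ∃ m : ℕ, f = fun z => a ^ m * z ^ n}) ∧
      (0 : ℂ) ∈ JuliaSet (genSemigroup {f | ∃ m : ℕ, f = fun z => a ^ m * z ^ n}) ∧
      ¬ excSet (genSemigroup {f | ∃ m : ℕ, f = fun z => a ^ m * z ^ n}) ⊆
          FatouSet (genSemigroup {f | ∃ m : ℕ, f = fun z => a ^ m * z ^ n}) := by
  have hpos : 0 < ‖a‖ := by linarith
  have ha0 : a ≠ 0 := norm_pos_iff.1 hpos
  have hexc : (0 : ℂ) ∈ excSet (genSemigroup {f | ∃ m : ℕ, f = fun z => a ^ m * z ^ n}) := by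
    refine (finite_singleton (0 : ℂ)).subset ?_
    rintro w ⟨f, hf, hw⟩
    change InGenSemigroup _ f at hf
    change w = 0
    induction hf generalizing w with
    | base h =>
      obtain ⟨m, rfl⟩ := h
      have : a ^ m * w ^ n = 0 := hw
      exact eq_zero_of_pow_eq_zero ((mul_eq_zero.1 this).resolve_left (pow_ne_zero m ha0))
    | comp _ _ ihf ihg => exact ihg (ihf hw)
  have hjul : (0 : ℂ) ∈ JuliaSet (genSemigroup {f | ∃ m : ℕ, f = fun z => a ^ m * z ^ n}) := by
    refine not_normalAt_of_blowup (fun k z => a ^ k * z ^ n)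
      (fun k => InGenSemigroup.base ⟨k, rfl⟩) 0 (fun k => ?_) ?_
    · simp [show n ≠ 0 by omega]
    · have hfreq : ∃ᶠ w in 𝓝[≠] (0 : ℂ), w ≠ 0 := Eventually.frequently self_mem_nhdsWithin
      refine (hfreq.filter_mono nhdsWithin_le_nhds).mono fun w hw => ?_
      simp only [norm_mul, norm_pow]
      exact (tendsto_pow_atTop_atTop_of_one_lt ha).atTop_mul_const
        (pow_pos (norm_pos_iff.2 hw) n)
  refine ⟨fun m => juliaSet_monomial hn (Real.rpow_pos_of_pos hpos _) ?_, hexc, hjul,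
    fun hsub => hjul (hsub hexc)⟩
  rw [norm_pow]
  exact radius_eq ha hn m
end
end
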